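/- arXiv:2109.09931 — 3 statements merged into one kernel-verified Lean document; each statement's English description precedes it below -/
import Mathlib

section
/- For every fixed integer r ≥ 2, the saturation number of two geometrically disjoint r-tuples satisfies sat_○(n, M_1^{(r)}) ~ C(n, r-1); that is, sat_○(n, M_1^{(r)}) / C(n, r-1) tends to 1 as n → ∞. -/
/-!
The saturation number of two geometrically disjoint `r`-tuples is asymptotic to
`n.choose (r - 1)`, because it lies between `(n - 1).choose (r - 1)` and
`n.choose (r - 1) + r ^ 2 * n.choose (r - 2)` once `n ≥ 2 * r` (`satNum_bounds`).

Containing `M_1^{(r)}` means having two edges of which one lies in an interval that misses the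
other (`Separated`).

*Upper bound* (`exists_isSat`). The star of all `r`-sets through a fixed point is `M_1`-free.
Extend it to a maximal `M_1`-free family. An added edge leaves a gap of fewer than `r` points
around the fixed point, so two of its elements are confined to `r` possible positions each.

*Lower bound* (`IsSat.choose_le_card`). In a saturated `H`, of any two complementary arcs at least
one contains an edge (`IsSat.exists_subset_arc`). For each point `v` let `[v, ρ v]` be the shortest
clockwise arc from `v` that contains an edge. Neither open arc between `v` and `ρ v` contains an
edge, so no edge is separated from an `r`-set through both points, and by saturation every such
`r`-set is in `H`. The pairs `{v, ρ v}` are `n` distinct pairs (`IsSat.exists_pairs`), and by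
Kruskal–Katona any `n - 1` pairs have at least `(n - 1).choose (r - 1)` supersets of size `r`,
a star being extremal.
-/

open Finset

/-- An abstract convex geometric hypergraph: `m` vertices on a circle, with the
cyclic ordering `0 < 1 < ⋯ < m-1 < 0`, together with a family of edges. -/
structure CGH where
  m : ℕ
  edges : Finset (Finset (Fin m))

/-- A list of points of `Fin n` is in (strict) cyclic order if some rotation of it
is strictly increasing in the linear order of `Fin n`. -/
def CyclicSorted {n : ℕ} (l : List (Fin n)) : Prop :=
  ∃ k : ℕ, (l.rotate k).Chain' (· < ·)

/-- `H` contains a subhypergraph isomorphic to the convex geometric hypergraph `F`: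
there is an injection of the vertices of `F` into `Fin n` respecting the cyclic
orderings and sending every edge of `F` to an edge of `H`. -/
def HasCopy (F : CGH) {n : ℕ} (H : Finset (Finset (Fin n))) : Prop :=
  ∃ f : Fin F.m → Fin n, Function.Injective f ∧ CyclicSorted (List.ofFn f) ∧
    ∀ e ∈ F.edges, e.image f ∈ H

/-- `H` is an `F`-saturated `r`-uniform convex geometric hypergraph on `Fin n`. -/
def IsSat (F : CGH) (r : ℕ) {n : ℕ} (H : Finset (Finset (Fin n))) : Prop :=
  (∀ h ∈ H, h.card = r) ∧ ¬ HasCopy F H ∧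
    ∀ e : Finset (Fin n), e.card = r → e ∉ H → HasCopy F (insert e H)

/-- The saturation number `sat_○(n, F)` for `r`-uniform cgh's on `Fin n`. -/
noncomputable def satNum (F : CGH) (r n : ℕ) : ℕ :=
  sInf {k | ∃ H : Finset (Finset (Fin n)), IsSat F r H ∧ H.card = k}

/-- `M_1^{(r)}`: two geometrically disjoint `r`-tuples. -/
def M1r (r : ℕ) : CGH where
  m := 2 * r
  edges := {Finset.univ.filter (fun i : Fin (2 * r) => (i : ℕ) < r),
            Finset.univ.filter (fun i : Fin (2 * r) => r ≤ (i : ℕ))}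

def M1cgh : CGH := ⟨6, {({0, 1, 2} : Finset (Fin 6)), ({3, 4, 5} : Finset (Fin 6))}⟩
def M2cgh : CGH := ⟨6, {({0, 1, 3} : Finset (Fin 6)), ({2, 4, 5} : Finset (Fin 6))}⟩
def M3cgh : CGH := ⟨6, {({0, 2, 4} : Finset (Fin 6)), ({1, 3, 5} : Finset (Fin 6))}⟩
def S1cgh : CGH := ⟨5, {({0, 1, 4} : Finset (Fin 5)), ({0, 2, 3} : Finset (Fin 5))}⟩
def S2cgh : CGH := ⟨5, {({0, 1, 2} : Finset (Fin 5)), ({0, 3, 4} : Finset (Fin 5))}⟩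
def S3cgh : CGH := ⟨5, {({0, 1, 3} : Finset (Fin 5)), ({0, 2, 4} : Finset (Fin 5))}⟩
def D1cgh : CGH := ⟨4, {({0, 1, 2} : Finset (Fin 4)), ({0, 2, 3} : Finset (Fin 4))}⟩
def D2cgh : CGH := ⟨4, {({0, 1, 2} : Finset (Fin 4)), ({0, 1, 3} : Finset (Fin 4))}⟩

/-- The closed clockwise arc `[a, b]` in `Fin n`. -/
def arcCC {n : ℕ} (a b : Fin n) : Finset (Fin n) :=
  if a ≤ b then Finset.univ.filter (fun x => a ≤ x ∧ x ≤ b)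
  else Finset.univ.filter (fun x => a ≤ x ∨ x ≤ b)

/-- The open clockwise arc `(a, b)` in `Fin n`. -/
def arcOO {n : ℕ} (a b : Fin n) : Finset (Fin n) :=
  if a < b then Finset.univ.filter (fun x => a < x ∧ x < b)
  else Finset.univ.filter (fun x => a < x ∨ x < b)

/-- The tuple `(w_1, …, w_{2ℓ+1})` (`0`-indexed here) consists of distinct points with
`w_1 < w_3 < ⋯ < w_{2ℓ+1} < w_2 < w_4 < ⋯ < w_{2ℓ} < w_1` in the cyclic order. -/
def SemiValid {n : ℕ} (ℓ : ℕ) (w : Fin (2 * ℓ + 1) → Fin n) : Prop :=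
  Function.Injective w ∧
    CyclicSorted (List.ofFn fun p : Fin (2 * ℓ + 1) =>
      w ⟨(2 * (p : ℕ)) % (2 * ℓ + 1), Nat.mod_lt _ (by omega)⟩)

/-- A semi-valid tuple is `r`-valid if moreover `|[w_i, w_{i-1}]| ≥ r` for all `i`. -/
def RValid {n : ℕ} (r ℓ : ℕ) (w : Fin (2 * ℓ + 1) → Fin n) : Prop :=
  SemiValid ℓ w ∧ ∀ i : Fin (2 * ℓ + 1), r ≤ (arcCC (w i) (w (i - 1))).card

/-- `H_n^{(r)}(C)`: all `r`-sets meeting every interval `[w_i, w_{i-1}]`. -/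
def HnC {n : ℕ} (r ℓ : ℕ) (w : Fin (2 * ℓ + 1) → Fin n) : Finset (Finset (Fin n)) :=
  (Finset.powersetCard r Finset.univ).filter fun e =>
    ∀ i : Fin (2 * ℓ + 1), (e ∩ arcCC (w i) (w (i - 1))).Nonempty

/-- `j` is the vertex `λ(v)` for `v` in `H`. -/
def IsLam {n : ℕ} [NeZero n] (H : Finset (Finset (Fin n))) (v j : Fin n) : Prop :=
  (∃ h ∈ H, v ∈ h ∧ h ⊆ arcCC j v) ∧ ¬ ∃ h ∈ H, v ∈ h ∧ h ⊆ arcCC (j + 1) v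

/-- `j` is the vertex `ρ(v)` for `v` in `H`. -/
def IsRho {n : ℕ} [NeZero n] (H : Finset (Finset (Fin n))) (v j : Fin n) : Prop :=
  (∃ h ∈ H, v ∈ h ∧ h ⊆ arcCC v j) ∧ ¬ ∃ h ∈ H, v ∈ h ∧ h ⊆ arcCC v (j - 1)

noncomputable def lamF {n : ℕ} [NeZero n] (H : Finset (Finset (Fin n))) (v : Fin n) : Fin n :=
  letI := Classical.propDecidable (∃ j, IsLam H v j)
  if h : ∃ j, IsLam H v j then h.choose else v

noncomputable def rhoF {n : ℕ} [NeZero n] (H : Finset (Finset (Fin n))) (v : Fin n) : Fin n :=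
  letI := Classical.propDecidable (∃ j, IsRho H v j)
  if h : ∃ j, IsRho H v j then h.choose else v

/-- Strict cyclic betweenness on `Fin n`. -/
def CyclicSbtw {n : ℕ} (a b c : Fin n) : Prop :=
  (a < b ∧ b < c) ∨ (b < c ∧ c < a) ∨ (c < a ∧ a < b)

/-- Isomorphism of two cgh's on `Fin n`: a bijection of the vertex set respecting the
cyclic order and inducing a bijection of the edge sets. -/
def CGHIso {n : ℕ} (H H' : Finset (Finset (Fin n))) : Prop :=
  ∃ g : Fin n ≃ Fin n,
    (∀ a b c : Fin n, CyclicSbtw a b c → CyclicSbtw (g a) (g b) (g c)) ∧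
    ∀ e : Finset (Fin n), e ∈ H ↔ e.image g ∈ H'

/-- The 3-cgh `H_n^{(3)}`: all triples containing `v_0`, together with all triples
containing one of the pairs `{v_1, v_{n-2}}`, `{v_1, v_{n-1}}`, `{v_2, v_{n-1}}`. -/
def Hn3 (n : ℕ) (hn : 6 ≤ n) : Finset (Finset (Fin n)) :=
  (Finset.powersetCard 3 Finset.univ).filter fun e =>
    (⟨0, by omega⟩ : Fin n) ∈ e ∨
    ((⟨1, by omega⟩ : Fin n) ∈ e ∧ (⟨n - 2, by omega⟩ : Fin n) ∈ e) ∨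
    ((⟨1, by omega⟩ : Fin n) ∈ e ∧ (⟨n - 1, by omega⟩ : Fin n) ∈ e) ∨
    ((⟨2, by omega⟩ : Fin n) ∈ e ∧ (⟨n - 1, by omega⟩ : Fin n) ∈ e)

/-- Saturation with respect to a family of cgh's. -/
def FamSat (ℱ : Set CGH) (r : ℕ) {n : ℕ} (H : Finset (Finset (Fin n))) : Prop :=
  (∀ h ∈ H, h.card = r) ∧ (∀ F ∈ ℱ, ¬ HasCopy F H) ∧
    ∀ e : Finset (Fin n), e.card = r → e ∉ H → ∃ F ∈ ℱ, HasCopy F (insert e H)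

noncomputable def famSatNum (ℱ : Set CGH) (r n : ℕ) : ℕ :=
  sInf {k | ∃ H : Finset (Finset (Fin n)), FamSat ℱ r H ∧ H.card = k}

/-- Rotation of a point of `Fin n` by an integer amount `m`. -/
def finShift {n : ℕ} (hn : 0 < n) (v : Fin n) (m : ℤ) : Fin n :=
  ⟨(((v : ℤ) + m) % (n : ℤ)).toNat, by
    have h0 : (0 : ℤ) < (n : ℤ) := by exact_mod_cast hn
    have h1 := Int.emod_nonneg ((v : ℤ) + m) (by omega : (n : ℤ) ≠ 0)
    have h2 := Int.emod_lt_of_pos ((v : ℤ) + m) h0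
    omega⟩

/-- The tuple `w` is `(i,k)`-consecutive: starting from position `i`, the entries at
positions `i, i+2, …, i+2(k-1)` are `k` consecutive points `v_j, v_{j+1}, …, v_{j+k-1}`. -/
def ConsecAt {n ℓ : ℕ} (hn : 0 < n) (w : Fin (2 * ℓ + 1) → Fin n)
    (i : Fin (2 * ℓ + 1)) (k : ℕ) : Prop :=
  ∃ j : Fin n, ∀ s : ℕ, s < k →
    w (i + ⟨(2 * s) % (2 * ℓ + 1), Nat.mod_lt _ (by omega)⟩) = finShift hn j s

/-- The tuple `C_{i,k,m}`: the `k` consecutive points at positions `i, i+2, …, i+2(k-1)`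
are rotated by `m` units; all other entries are unchanged. -/
def shiftTuple {n ℓ : ℕ} (hn : 0 < n) (w : Fin (2 * ℓ + 1) → Fin n)
    (i : Fin (2 * ℓ + 1)) (k : ℕ) (m : ℤ) : Fin (2 * ℓ + 1) → Fin n :=
  fun p => if (p - i).val % 2 = 0 ∧ (p - i).val / 2 < k then finShift hn (w p) m else w p

/-! ### Copies of `M_1^{(r)}` and separated edges -/

/-- `e` and `h` are geometrically disjoint, `e` lying in an interval of the linear order of
`Fin n` that misses `h`. Of two disjoint complementary arcs at least one is such an interval, so
up to swapping `e` and `h` this is the general situation of two sets in disjoint arcs. -/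
def Separated {n : ℕ} (e h : Finset (Fin n)) : Prop :=
  ∃ a b : ℕ, (∀ x ∈ e, a ≤ (x : ℕ) ∧ (x : ℕ) < b) ∧ ∀ x ∈ h, (x : ℕ) < a ∨ b ≤ (x : ℕ)

/-- The order in which the values of a cyclically sorted `f` appear on the line: it is that of
the indices, cut open at some index `k`. -/
lemma CyclicSorted.exists_cut {n m : ℕ} (hm : 0 < m) {f : Fin m → Fin n}
    (hf : CyclicSorted (List.ofFn f)) :
    ∃ k < m, ∀ i j : Fin m,
      (if k ≤ (i : ℕ) then (i : ℕ) - k else i + m - k) <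
        (if k ≤ (j : ℕ) then (j : ℕ) - k else j + m - k) → f i < f j := by
  obtain ⟨k, hk⟩ := hf
  refine ⟨k % m, Nat.mod_lt _ hm, ?_⟩
  have hk' : ((List.ofFn f).rotate k).Pairwise (· < ·) := List.isChain_iff_pairwise.mp hk
  rw [List.pairwise_iff_getElem] at hk'
  have hlen : ((List.ofFn f).rotate k).length = m := by simp
  -- the index `i` of `f` sits at position `(i - k) mod m` of the rotated list
  have key : ∀ i : Fin m, ∀ p : ℕ,
      p = (if k % m ≤ (i : ℕ) then (i : ℕ) - k % m else i + m - k % m) →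
      ∃ hp : p < ((List.ofFn f).rotate k).length, ((List.ofFn f).rotate k)[p] = f i := by
    intro i p hp
    have hkm := Nat.mod_lt k hm
    have hi := i.2
    have hpm : p < m := by split_ifs at hp <;> omega
    refine ⟨by omega, ?_⟩
    rw [List.getElem_rotate, List.getElem_ofFn]
    congr 1
    ext
    simp only [List.length_ofFn]
    rw [Nat.add_mod, Nat.mod_eq_of_lt hpm]
    split_ifs at hp with h
    · rw [hp, Nat.sub_add_cancel h, Nat.mod_eq_of_lt hi]
    · rw [show p + k % m = i + m by omega, Nat.add_mod_right, Nat.mod_eq_of_lt hi]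
  intro i j hij
  obtain ⟨hp, hpi⟩ := key i _ rfl
  obtain ⟨hq, hqj⟩ := key j _ rfl
  rw [← hpi, ← hqj]
  exact hk' _ _ hp hq hij

lemma exists_separated_of_hasCopy {r n : ℕ} (hr : 1 ≤ r) {H : Finset (Finset (Fin n))}
    (h : HasCopy (M1r r) H) : ∃ e ∈ H, ∃ h ∈ H, Separated e h := by
  obtain ⟨f, -, hc, hE⟩ := h
  change Fin (2 * r) → Fin n at f
  obtain ⟨k, hk, hlt⟩ := CyclicSorted.exists_cut (m := 2 * r) (by omega) hc
  have hle : ∀ i j : Fin (2 * r),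
      (if k ≤ (i : ℕ) then (i : ℕ) - k else i + 2 * r - k) ≤
        (if k ≤ (j : ℕ) then (j : ℕ) - k else j + 2 * r - k) → f i ≤ f j := by
    intro i j hij
    rcases hij.lt_or_eq with h | h
    · exact (hlt i j h).le
    · have : i = j := by
        ext
        have hi := i.2
        have hj := j.2
        split_ifs at h <;> omega
      rw [this]
  have h1 : (Finset.univ.filter (fun i : Fin (2 * r) => (i : ℕ) < r)).image f ∈ H :=
    hE _ (Finset.mem_insert_self _ _)
  have h2 : (Finset.univ.filter (fun i : Fin (2 * r) => r ≤ (i : ℕ))).image f ∈ H :=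
    hE _ (Finset.mem_insert_of_mem (Finset.mem_singleton_self _))
  -- the half of the indices that does not contain the cut occupies an interval
  rcases le_or_gt k r with hkr | hkr
  · refine ⟨_, h2, _, h1, f ⟨r, by omega⟩, f ⟨2 * r - 1, by omega⟩ + 1, ?_, ?_⟩
    · simp only [Finset.mem_image, Finset.mem_filter, Finset.mem_univ, true_and]
      rintro _ ⟨i, hi, rfl⟩
      have := i.2
      refine ⟨Fin.le_def.mp (hle _ _ ?_), Nat.lt_succ_of_le (Fin.le_def.mp (hle _ _ ?_))⟩ <;>
        split_ifs <;> simp only at * <;> omega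
    · simp only [Finset.mem_image, Finset.mem_filter, Finset.mem_univ, true_and]
      rintro _ ⟨i, hi, rfl⟩
      rcases le_or_gt k i with hki | hki
      · left
        refine Fin.lt_def.mp (hlt _ _ ?_)
        split_ifs <;> simp only at * <;> omega
      · right
        refine Nat.succ_le_of_lt (Fin.lt_def.mp (hlt _ _ ?_))
        split_ifs <;> simp only at * <;> omega
  · refine ⟨_, h1, _, h2, f ⟨0, by omega⟩, f ⟨r - 1, by omega⟩ + 1, ?_, ?_⟩
    · simp only [Finset.mem_image, Finset.mem_filter, Finset.mem_univ, true_and]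
      rintro _ ⟨i, hi, rfl⟩
      refine ⟨Fin.le_def.mp (hle _ _ ?_), Nat.lt_succ_of_le (Fin.le_def.mp (hle _ _ ?_))⟩ <;>
        split_ifs <;> simp only at * <;> omega
    · simp only [Finset.mem_image, Finset.mem_filter, Finset.mem_univ, true_and]
      rintro _ ⟨i, hi, rfl⟩
      have := i.2
      rcases le_or_gt k i with hki | hki
      · left
        refine Fin.lt_def.mp (hlt _ _ ?_)
        split_ifs <;> simp only at * <;> omega
      · right
        refine Nat.succ_le_of_lt (Fin.lt_def.mp (hlt _ _ ?_))
        split_ifs <;> simp only at * <;> omega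

lemma hasCopy_of_separated {r n : ℕ} {H : Finset (Finset (Fin n))} {e h : Finset (Fin n)}
    (he : e ∈ H) (hh : h ∈ H) (hec : e.card = r) (hhc : h.card = r) (hs : Separated e h) :
    HasCopy (M1r r) H := by
  obtain ⟨a, b, hab, hout⟩ := hs
  set L₁ := (h.filter (fun x : Fin n => (x : ℕ) < a)).sort with hL₁
  set L₂ := e.sort with hL₂
  set L₃ := (h.filter (fun x : Fin n => ¬ (x : ℕ) < a)).sort with hL₃
  -- the points of `e ∪ h` in cyclic order, starting with those of `e`
  set M := L₂ ++ (L₃ ++ L₁) with hM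
  have hl₂ : L₂.length = r := by rw [hL₂, Finset.length_sort, hec]
  have hl₃₁ : (L₃ ++ L₁).length = r := by
    rw [List.length_append, hL₁, hL₃, Finset.length_sort, Finset.length_sort, add_comm,
      Finset.card_filter_add_card_filter_not, hhc]
  have hlen : M.length = 2 * r := by
    rw [hM, List.length_append, hl₂, hl₃₁, two_mul]
  have hmem₃₁ : ∀ x ∈ L₃ ++ L₁, x ∈ h := by
    intro x hx
    rw [List.mem_append, hL₁, hL₃, Finset.mem_sort, Finset.mem_sort, Finset.mem_filter,
      Finset.mem_filter] at hx
    tauto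
  have hrot : M.rotate (L₂ ++ L₃).length = L₁ ++ (L₂ ++ L₃) := by
    rw [hM, ← List.append_assoc, List.rotate_append_length_eq]
  have hsorted : (L₁ ++ (L₂ ++ L₃)).Pairwise (· < ·) := by
    rw [List.pairwise_append, List.pairwise_append]
    refine ⟨(Finset.sortedLT_sort _).pairwise,
      ⟨(Finset.sortedLT_sort _).pairwise, (Finset.sortedLT_sort _).pairwise, ?_⟩, ?_⟩
    · intro x hx y hy
      rw [hL₂, Finset.mem_sort] at hx
      rw [hL₃, Finset.mem_sort, Finset.mem_filter] at hy
      have := hab x hx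
      have := hout y hy.1
      rw [Fin.lt_def]
      omega
    · intro x hx y hy
      rw [hL₁, Finset.mem_sort, Finset.mem_filter] at hx
      rw [List.mem_append, hL₂, hL₃, Finset.mem_sort, Finset.mem_sort, Finset.mem_filter] at hy
      rw [Fin.lt_def]
      rcases hy with hy | hy
      · have := hab y hy
        omega
      · omega
  have hnodup : M.Nodup := by
    rw [← List.nodup_rotate (n := (L₂ ++ L₃).length), hrot]
    exact hsorted.imp (fun h => ne_of_lt h)
  let f : Fin (2 * r) → Fin n := fun i => M[(i : ℕ)]'(by rw [hlen]; exact i.2)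
  have hfinj : Function.Injective f := by
    intro i j hij
    exact Fin.ext ((List.Nodup.getElem_inj_iff hnodup).mp hij)
  have hofFn : List.ofFn f = M := by
    apply List.ext_getElem
    · simp [hlen]
    · intro i h1 h2
      simp [f]
  have himg : ∀ (s : Finset (Fin (2 * r))) (t : Finset (Fin n)), s.card = t.card →
      (∀ i ∈ s, f i ∈ t) → s.image f = t := by
    intro s t hst hs
    apply Finset.eq_of_subset_of_card_le
    · intro x hx
      obtain ⟨i, hi, rfl⟩ := Finset.mem_image.mp hx
      exact hs i hi
    · rw [Finset.card_image_of_injective _ hfinj, hst]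
  have hc₁ : (Finset.univ.filter (fun i : Fin (2 * r) => (i : ℕ) < r)).card = r := by
    rw [Fin.card_filter_val_lt]; omega
  have hc₂ : (Finset.univ.filter (fun i : Fin (2 * r) => r ≤ (i : ℕ))).card = r := by
    have := Finset.card_filter_add_card_filter_not (s := (Finset.univ : Finset (Fin (2 * r))))
      (fun i : Fin (2 * r) => (i : ℕ) < r)
    rw [hc₁, Finset.card_univ, Fintype.card_fin] at this
    simp only [not_lt] at this
    omega
  refine ⟨f, hfinj, ⟨(L₂ ++ L₃).length, ?_⟩, ?_⟩
  · change ((List.ofFn f).rotate _).Chain' _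
    rw [hofFn, hrot]
    exact List.isChain_iff_pairwise.mpr hsorted
  · intro s hs
    rcases Finset.mem_insert.mp hs with rfl | hs
    · have heq : Finset.image f _ = e := himg _ e (hc₁.trans hec.symm) fun i hi => by
        have hi' : (i : ℕ) < L₂.length := by
          rw [hl₂]; exact (Finset.mem_filter.mp hi).2
        have : f i = L₂[(i : ℕ)] := List.getElem_append_left hi'
        rw [this, ← Finset.mem_sort (· ≤ ·)]
        exact List.getElem_mem hi'
      exact heq.symm ▸ he
    · have heq : Finset.image f _ = h := himg _ h (hc₂.trans hhc.symm) fun i hi => by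
        have hi' : L₂.length ≤ (i : ℕ) := by
          rw [hl₂]; exact (Finset.mem_filter.mp hi).2
        have : f i = (L₃ ++ L₁)[(i : ℕ) - L₂.length]'(by have := i.2; omega) :=
          List.getElem_append_right hi'
        rw [this]
        exact hmem₃₁ _ (List.getElem_mem _)
      rw [Finset.mem_singleton.mp hs]
      exact heq.symm ▸ hh

lemma Separated.not_self {n : ℕ} {e : Finset (Fin n)} (he : e.Nonempty) : ¬ Separated e e := by
  rintro ⟨a, b, h1, h2⟩
  obtain ⟨x, hx⟩ := he
  have := h1 x hx
  have := h2 x hx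
  omega

/-- A set geometrically disjoint from `e` lies on one side of every chord of `e`. -/
lemma side_of_separated {n : ℕ} {e h : Finset (Fin n)}
    (hs : Separated e h ∨ Separated h e) {p q : Fin n} (hp : p ∈ e) (hq : q ∈ e) :
    (∀ x ∈ h, (p : ℕ) < x ∧ (x : ℕ) < q) ∨ ∀ x ∈ h, (x : ℕ) < p ∨ (q : ℕ) < x := by
  rcases hs with ⟨a, b, h1, h2⟩ | ⟨a, b, h1, h2⟩
  · right
    intro x hx
    have := h1 p hp
    have := h1 q hq
    have := h2 x hx
    omega
  · have hp' := h2 p hp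
    have hq' := h2 q hq
    by_cases hc : (p : ℕ) < a ∧ b ≤ (q : ℕ)
    · left
      intro x hx
      have := h1 x hx
      omega
    · right
      intro x hx
      have := h1 x hx
      omega

/-! ### The lower bound -/

section Saturated

variable {r n : ℕ} {H : Finset (Finset (Fin n))}

lemma IsSat.not_separated (hH : IsSat (M1r r) r H) {e h : Finset (Fin n)} (he : e ∈ H)
    (hh : h ∈ H) : ¬ Separated e h := fun hs =>
  hH.2.1 (hasCopy_of_separated he hh (hH.1 e he) (hH.1 h hh) hs)

lemma IsSat.exists_separated (hr : 1 ≤ r) (hH : IsSat (M1r r) r H) {e : Finset (Fin n)}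
    (hec : e.card = r) (he : e ∉ H) : ∃ h ∈ H, Separated e h ∨ Separated h e := by
  obtain ⟨s, hs, t, ht, hst⟩ := exists_separated_of_hasCopy hr (hH.2.2 e hec he)
  have hne : e.Nonempty := Finset.card_pos.mp (by omega)
  rcases Finset.mem_insert.mp hs with rfl | hs' <;>
    rcases Finset.mem_insert.mp ht with rfl | ht'
  · exact absurd hst (Separated.not_self hne)
  · exact ⟨t, ht', Or.inl hst⟩
  · exact ⟨s, hs', Or.inr hst⟩
  · exact absurd hst (hH.not_separated hs' ht')

/-- If `A` contains `p`, `q` and at least `r` points in all, then an edge of `H` lies in `A` or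
on one side of the chord `pq`: an `r`-subset of `A` through `p` and `q` is either an edge, or
disjoint from one. -/
lemma IsSat.exists_side (hr : 2 ≤ r) (hH : IsSat (M1r r) r H) {A : Finset (Fin n)}
    (hA : r ≤ A.card) {p q : Fin n} (hp : p ∈ A) (hq : q ∈ A) :
    ∃ h ∈ H, (∀ x ∈ h, x ∈ A) ∨ (∀ x ∈ h, (p : ℕ) < x ∧ (x : ℕ) < q) ∨
      ∀ x ∈ h, (x : ℕ) < p ∨ (q : ℕ) < x := by
  have hpq : ({p, q} : Finset (Fin n)) ⊆ A := by
    intro x hx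
    rcases Finset.mem_insert.mp hx with rfl | hx
    · exact hp
    · rwa [Finset.mem_singleton.mp hx]
  obtain ⟨e, hpe, heA, hec⟩ :=
    Finset.exists_subsuperset_card_eq hpq (Finset.card_le_two.trans hr) hA
  by_cases he : e ∈ H
  · exact ⟨e, he, Or.inl heA⟩
  · obtain ⟨h, hh, hs⟩ := hH.exists_separated (by omega) hec he
    exact ⟨h, hh, Or.inr (side_of_separated hs (hpe (by simp)) (hpe (by simp)))⟩

/-- Of two complementary arcs, at least one contains an edge of a saturated `H`. -/
lemma IsSat.exists_subset_arc (hr : 2 ≤ r) (hn : 2 * r ≤ n) (hH : IsSat (M1r r) r H) {a b : ℕ}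
    (hab : a < b) (hb : b ≤ n) :
    ∃ h ∈ H, (∀ x ∈ h, a ≤ (x : ℕ) ∧ (x : ℕ) < b) ∨ ∀ x ∈ h, (x : ℕ) < a ∨ b ≤ (x : ℕ) := by
  set I : Finset (Fin n) := Finset.univ.filter (fun x : Fin n => a ≤ (x : ℕ) ∧ (x : ℕ) < b) with hI
  set J : Finset (Fin n) :=
    Finset.univ.filter (fun x : Fin n => ¬ (a ≤ (x : ℕ) ∧ (x : ℕ) < b)) with hJ
  have memI : ∀ x : Fin n, x ∈ I ↔ a ≤ (x : ℕ) ∧ (x : ℕ) < b := by simp [hI]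
  have memJ : ∀ x : Fin n, x ∈ J ↔ ¬ (a ≤ (x : ℕ) ∧ (x : ℕ) < b) := fun x => by
    rw [hJ, Finset.mem_filter]; simp
  have hIJ : I.card + J.card = n := by
    rw [hI, hJ, Finset.card_filter_add_card_filter_not, Finset.card_univ, Fintype.card_fin]
  -- the chord joining the two ends of the longer of the two arcs has the arcs as its sides
  rcases le_or_gt r I.card with hIr | hIr
  · obtain ⟨h, hh, hc⟩ := hH.exists_side hr hIr (p := ⟨a, by omega⟩) (q := ⟨b - 1, by omega⟩)
      ((memI _).2 (by simp only; omega)) ((memI _).2 (by simp only; omega))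
    refine ⟨h, hh, ?_⟩
    rcases hc with hc | hc | hc
    · exact Or.inl fun x hx => (memI x).1 (hc x hx)
    · exact Or.inl fun x hx => by have := hc x hx; simp only at this; omega
    · exact Or.inr fun x hx => by have := hc x hx; simp only at this; omega
  · have hJr : r ≤ J.card := by omega
    have hne : ¬ (a = 0 ∧ b = n) := by
      rintro ⟨rfl, rfl⟩
      obtain ⟨x, hx⟩ := Finset.card_pos.mp (show 0 < J.card by omega)
      exact (memJ x).1 hx ⟨Nat.zero_le _, x.2⟩
    rcases Nat.eq_zero_or_pos a with ha | ha
    · obtain ⟨h, hh, hc⟩ := hH.exists_side hr hJr (p := ⟨b, by omega⟩) (q := ⟨n - 1, by omega⟩)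
        ((memJ _).2 (by simp only; omega)) ((memJ _).2 (by simp only; omega))
      refine ⟨h, hh, ?_⟩
      rcases hc with hc | hc | hc
      · exact Or.inr fun x hx => by have := (memJ x).1 (hc x hx); omega
      · exact Or.inr fun x hx => by have := hc x hx; simp only at this; omega
      · exact Or.inl fun x hx => by
          have := hc x hx
          have := x.2
          simp only at *
          omega
    · rcases Nat.lt_or_ge b n with hbn | hbn
      · obtain ⟨h, hh, hc⟩ := hH.exists_side hr hJr (p := ⟨a - 1, by omega⟩) (q := ⟨b, by omega⟩)
          ((memJ _).2 (by simp only; omega)) ((memJ _).2 (by simp only; omega))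
        refine ⟨h, hh, ?_⟩
        rcases hc with hc | hc | hc
        · exact Or.inr fun x hx => by have := (memJ x).1 (hc x hx); omega
        · exact Or.inl fun x hx => by have := hc x hx; simp only at this; omega
        · exact Or.inr fun x hx => by have := hc x hx; simp only at this; omega
      · obtain ⟨h, hh, hc⟩ := hH.exists_side hr hJr (p := ⟨0, by omega⟩) (q := ⟨a - 1, by omega⟩)
          ((memJ _).2 (by simp only; omega)) ((memJ _).2 (by simp only; omega))
        refine ⟨h, hh, ?_⟩
        rcases hc with hc | hc | hc
        · exact Or.inr fun x hx => by have := (memJ x).1 (hc x hx); omega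
        · exact Or.inr fun x hx => by have := hc x hx; simp only at this; omega
        · exact Or.inl fun x hx => by
            have := hc x hx
            have := x.2
            simp only at *
            omega

/-- The clockwise distance from `v` to `x`. -/
def cwDist {n : ℕ} (v x : Fin n) : ℕ := if (v : ℕ) ≤ x then x - v else x + n - v

/-- For each `v`, let `[v, ρ v]` be the shortest clockwise arc from `v` containing an edge. -/
lemma IsSat.exists_rho (hr : 2 ≤ r) (hn : 2 * r ≤ n) (hH : IsSat (M1r r) r H) :
    ∃ ρ : Fin n → Fin n, ∀ v, (∃ h ∈ H, ∀ x ∈ h, cwDist v x ≤ cwDist v (ρ v)) ∧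
      ∀ h ∈ H, ∃ x ∈ h, cwDist v (ρ v) ≤ cwDist v x := by
  classical
  suffices ∀ v : Fin n, ∃ w, (∃ h ∈ H, ∀ x ∈ h, cwDist v x ≤ cwDist v w) ∧
      ∀ h ∈ H, ∃ x ∈ h, cwDist v w ≤ cwDist v x by
    choose ρ hρ using this
    exact ⟨ρ, hρ⟩
  intro v
  have hmax : ∀ h ∈ H, ∃ w ∈ h, ∀ x ∈ h, cwDist v x ≤ cwDist v w := fun h hh =>
    Finset.exists_max_image h (cwDist v) (Finset.card_pos.mp (by have := hH.1 h hh; omega))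
  obtain ⟨h₀, hh₀, -⟩ := hH.exists_subset_arc hr hn (a := 0) (b := n) (by omega) le_rfl
  obtain ⟨w₀, -, hw₀⟩ := hmax h₀ hh₀
  obtain ⟨w, hw, hmin⟩ := Finset.exists_min_image
    (Finset.univ.filter fun w => ∃ h ∈ H, ∀ x ∈ h, cwDist v x ≤ cwDist v w) (cwDist v)
    ⟨w₀, by simpa using ⟨h₀, hh₀, hw₀⟩⟩
  refine ⟨w, (Finset.mem_filter.mp hw).2, fun h hh => ?_⟩
  obtain ⟨x, hx, hxm⟩ := hmax h hh
  exact ⟨x, hx, hmin x (Finset.mem_filter.mpr ⟨Finset.mem_univ _, h, hh, hxm⟩)⟩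

/-- The `n` pairs `{v, ρ v}` are distinct, and every `r`-set containing one of them is an edge:
no edge lies in the open arc `(v, ρ v)` by minimality, and none in `(ρ v, v)`, which is disjoint
from an edge in `[v, ρ v]`. Distinctness holds because `ρ v = w` and `ρ w = v` would leave the
complementary arcs `[v, w)` and `[w, v)` both without edges. -/
lemma IsSat.exists_pairs (hr : 2 ≤ r) (hn : 2 * r ≤ n) (hH : IsSat (M1r r) r H) :
    ∃ P : Finset (Finset (Fin n)), P.card = n ∧ (∀ p ∈ P, p.card = 2) ∧
      ∀ p ∈ P, ∀ e : Finset (Fin n), e.card = r → p ⊆ e → e ∈ H := by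
  classical
  obtain ⟨ρ, hρ⟩ := hH.exists_rho hr hn
  have hne : ∀ v, v ≠ ρ v := by
    intro v hv
    obtain ⟨h, hh, hx⟩ := (hρ v).1
    have : h ⊆ {v} := by
      intro x hxh
      have := hx x hxh
      rw [← hv] at this
      rw [Finset.mem_singleton]
      ext
      have := x.2
      have := v.2
      simp only [cwDist] at *
      split_ifs at * <;> omega
    have := Finset.card_le_card this
    rw [hH.1 h hh, Finset.card_singleton] at this
    omega
  have hinv : ∀ v, ρ (ρ v) ≠ v := by
    -- the two complementary arcs are cut at the smaller and the larger of the two points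
    have aux : ∀ v w : Fin n, (v : ℕ) < w → ρ v = w → ρ w = v → False := by
      intro v w hvw hv hw
      obtain ⟨h, hh, hc⟩ := hH.exists_subset_arc hr hn hvw w.2.le
      obtain ⟨x, hx, hxd⟩ := (hρ v).2 h hh
      obtain ⟨y, hy, hyd⟩ := (hρ w).2 h hh
      rw [hv] at hxd
      rw [hw] at hyd
      have := x.2
      have := y.2
      simp only [cwDist] at *
      rcases hc with hc | hc
      · have := hc x hx
        split_ifs at * <;> omega
      · have := hc y hy
        split_ifs at * <;> omega
    intro v hv
    rcases Nat.lt_or_ge (v : ℕ) (ρ v) with h | h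
    · exact aux v (ρ v) h rfl hv
    · refine aux (ρ v) v (lt_of_le_of_ne h fun h' => hne v (Fin.ext h'.symm)) hv rfl
  refine ⟨Finset.univ.image fun v => {v, ρ v}, ?_, ?_, ?_⟩
  · rw [Finset.card_image_of_injective, Finset.card_univ, Fintype.card_fin]
    intro v w hvw
    by_contra hne'
    have h1 : v ∈ ({w, ρ w} : Finset (Fin n)) := by
      rw [← show ({v, ρ v} : Finset (Fin n)) = {w, ρ w} from hvw]; simp
    have h2 : w ∈ ({v, ρ v} : Finset (Fin n)) := by
      rw [show ({v, ρ v} : Finset (Fin n)) = {w, ρ w} from hvw]; simp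
    simp only [Finset.mem_insert, Finset.mem_singleton] at h1 h2
    have h1' : v = ρ w := h1.resolve_left hne'
    have h2' : w = ρ v := h2.resolve_left (Ne.symm hne')
    exact hinv v (by rw [← h2', ← h1'])
  · intro p hp
    obtain ⟨v, -, rfl⟩ := Finset.mem_image.mp hp
    exact Finset.card_pair (hne v)
  · intro p hp e hec hpe
    obtain ⟨v, -, rfl⟩ := Finset.mem_image.mp hp
    have hv : v ∈ e := hpe (by simp)
    have hw : ρ v ∈ e := hpe (by simp)
    have hvw : (v : ℕ) ≠ ρ v := fun h => hne v (Fin.ext h)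
    by_contra he
    obtain ⟨h, hh, hs⟩ := hH.exists_separated (by omega) hec he
    obtain ⟨h', hh', hle⟩ := (hρ v).1
    obtain ⟨y, hy, hyd⟩ := (hρ v).2 h hh
    have hyn := y.2
    rcases Nat.lt_or_gt_of_ne hvw with hlt | hlt
    · rcases side_of_separated hs hv hw with hc | hc
      · have := hc y hy
        simp only [cwDist] at *
        split_ifs at * <;> omega
      · refine hH.not_separated hh' hh ⟨v, ρ v + 1, fun x hx => ?_, fun x hx => ?_⟩
        · have := hle x hx
          have := x.2
          simp only [cwDist] at *
          split_ifs at * <;> omega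
        · have := hc x hx
          omega
    · rcases side_of_separated hs hw hv with hc | hc
      · refine hH.not_separated hh hh' ⟨ρ v + 1, v, fun x hx => ?_, fun x hx => ?_⟩
        · have := hc x hx
          omega
        · have := hle x hx
          have := x.2
          simp only [cwDist] at *
          split_ifs at * <;> omega
      · have := hc y hy
        simp only [cwDist] at *
        split_ifs at * <;> omega

open FinsetFamily in
/-- The lower bound: by Kruskal–Katona in Lovász's form, applied to complements, `n - 1` pairs
have at least `(n - 1).choose (r - 1)` supersets of size `r`. -/
lemma IsSat.choose_le_card (hr : 2 ≤ r) (hn : 2 * r ≤ n) (hH : IsSat (M1r r) r H) :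
    (n - 1).choose (r - 1) ≤ H.card := by
  classical
  obtain ⟨P, hPc, hP2, hPH⟩ := hH.exists_pairs hr hn
  have hcardP : (P.image compl).card = n := by
    rw [Finset.card_image_of_injective _ compl_injective, hPc]
  have hsized : ((P.image compl : Finset (Finset (Fin n))) : Set (Finset (Fin n))).Sized
      (n - 2) := by
    intro s hs
    obtain ⟨p, hp, rfl⟩ := Finset.mem_image.mp (Finset.mem_coe.mp hs)
    rw [Finset.card_compl, Fintype.card_fin, hP2 p hp]
  have hkk := Finset.kruskal_katona_lovasz_form (i := r - 2) (r := n - 2) (k := n - 1)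
    (𝒜 := P.image compl) (by omega) (by omega) (by omega) hsized (by
      rw [hcardP, ← Nat.choose_symm (by omega), show n - 1 - (n - 2) = 1 by omega,
        Nat.choose_one_right]
      omega)
  rw [← Nat.choose_symm (by omega), show n - 1 - (n - 2 - (r - 2)) = r - 1 by omega] at hkk
  refine hkk.trans ?_
  rw [← Finset.card_image_of_injective H compl_injective]
  refine Finset.card_le_card fun t ht => ?_
  obtain ⟨s, hs, hts, hcard⟩ := Finset.mem_shadow_iterate_iff_exists_sdiff.mp ht
  obtain ⟨p, hp, rfl⟩ := Finset.mem_image.mp hs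
  refine Finset.mem_image.mpr ⟨tᶜ, hPH p hp _ ?_ ?_, compl_compl t⟩
  · have h1 := Finset.card_sdiff_add_card_eq_card hts
    rw [hcard, Finset.card_compl, hP2 p hp, Fintype.card_fin] at h1
    rw [Finset.card_compl, Fintype.card_fin]
    omega
  · intro x hx
    rw [Finset.mem_compl]
    intro hxt
    exact (Finset.mem_compl.mp (hts hxt)) hx

end Saturated

/-! ### The upper bound -/

/-- The upper bound: complete the star of all `r`-sets through the point `0` to a saturated
family. An added edge has its least and greatest elements among the first `r` and the last `r`
points, since otherwise some member of the star lies in its gap around `0`. -/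
lemma exists_isSat {r n : ℕ} (hr : 2 ≤ r) (hn : 2 * r ≤ n) :
    ∃ H : Finset (Finset (Fin n)), IsSat (M1r r) r H ∧
      H.card ≤ n.choose (r - 1) + r ^ 2 * n.choose (r - 2) := by
  classical
  let o : Fin n := ⟨0, by omega⟩
  let S : Finset (Finset (Fin n)) := (Finset.powersetCard r Finset.univ).filter fun e => o ∈ e
  have memS : ∀ e, e ∈ S ↔ e.card = r ∧ o ∈ e := by
    intro e
    simp [S, Finset.mem_powersetCard]
  let 𝓕 : Finset (Finset (Finset (Fin n))) := Finset.univ.filter fun H =>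
    S ⊆ H ∧ (∀ h ∈ H, h.card = r) ∧ ¬ HasCopy (M1r r) H
  have hS : S ∈ 𝓕 := by
    refine Finset.mem_filter.mpr ⟨Finset.mem_univ _, subset_rfl, fun h hh => ((memS h).1 hh).1, ?_⟩
    intro hc
    obtain ⟨e, he, h, hh, a, b, h1, h2⟩ := exists_separated_of_hasCopy (by omega) hc
    have := h1 o ((memS e).1 he).2
    have := h2 o ((memS h).1 hh).2
    omega
  obtain ⟨H, hH, hmax⟩ := Finset.exists_max_image 𝓕 Finset.card ⟨S, hS⟩
  obtain ⟨-, hSH, hunif, hfree⟩ := Finset.mem_filter.mp hH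
  refine ⟨H, ⟨hunif, hfree, fun e hec he => ?_⟩, ?_⟩
  · by_contra hc
    have := hmax (insert e H) (Finset.mem_filter.mpr ⟨Finset.mem_univ _,
      hSH.trans (Finset.subset_insert _ _), ?_, hc⟩)
    · rw [Finset.card_insert_of_notMem he] at this
      omega
    · intro h hh
      rcases Finset.mem_insert.mp hh with rfl | hh
      · exact hec
      · exact hunif h hh
  -- `X` covers the edges through `0`; `Y` covers the others, each determined by its two extreme
  -- points and the remaining `r - 2` points
  let X : Finset (Finset (Fin n)) := (Finset.powersetCard (r - 1) Finset.univ).image (insert o)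
  let Y : Finset (Finset (Fin n)) :=
    ((Finset.range r ×ˢ Finset.range r) ×ˢ
      Finset.powersetCard (r - 2) (Finset.univ : Finset (Fin n))).image
      fun z => Finset.univ.filter fun x : Fin n =>
        (x : ℕ) = z.1.1 ∨ (x : ℕ) + 1 + z.1.2 = n ∨ x ∈ z.2
  have hX : X.card ≤ n.choose (r - 1) :=
    Finset.card_image_le.trans (by simp)
  have hY : Y.card ≤ r ^ 2 * n.choose (r - 2) :=
    Finset.card_image_le.trans (by simp [sq])
  refine (Finset.card_le_card fun e he => ?_).trans
    ((Finset.card_union_le X Y).trans (add_le_add hX hY))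
  have hec := hunif e he
  rw [Finset.mem_union]
  by_cases hoe : o ∈ e
  · left
    refine Finset.mem_image.mpr ⟨e.erase o, ?_, Finset.insert_erase hoe⟩
    simp [Finset.mem_powersetCard, Finset.card_erase_of_mem hoe, hec]
  · right
    have hne : e.Nonempty := Finset.card_pos.mp (by omega)
    obtain ⟨p, hp, hpm⟩ := Finset.exists_min_image e (fun x : Fin n => (x : ℕ)) hne
    obtain ⟨q, hq, hqm⟩ := Finset.exists_max_image e (fun x : Fin n => (x : ℕ)) hne
    have hpn := p.2
    have hqn := q.2
    have hpq : p ≠ q := by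
      rintro rfl
      have : e ⊆ {p} := fun x hx => Finset.mem_singleton.mpr
        (Fin.ext (le_antisymm (hqm x hx) (hpm x hx)))
      have := Finset.card_le_card this
      rw [Finset.card_singleton] at this
      omega
    have hpq' : (p : ℕ) < q := lt_of_le_of_ne (hpm q hq) fun h => hpq (Fin.ext h)
    have hp0 : 0 < (p : ℕ) := Nat.pos_of_ne_zero fun h =>
      hoe (by rwa [show o = p from Fin.ext h.symm])
    -- the gap of `e` around `0`
    let G : Finset (Fin n) := Finset.univ.filter fun x : Fin n => (x : ℕ) < p ∨ (q : ℕ) < x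
    have hG : G.card < r := by
      by_contra! hG
      obtain ⟨h, hoh, hhG, hhc⟩ := Finset.exists_subsuperset_card_eq
        (s := {o}) (t := G) (n := r)
        (Finset.singleton_subset_iff.mpr (Finset.mem_filter.mpr ⟨Finset.mem_univ _, Or.inl hp0⟩))
        (by simp; omega) hG
      refine hfree (hasCopy_of_separated he
        (hSH ((memS h).2 ⟨hhc, hoh (Finset.mem_singleton_self _)⟩)) hec hhc
        ⟨p, q + 1, fun x hx => ⟨hpm x hx, Nat.lt_succ_of_le (hqm x hx)⟩, fun x hx => ?_⟩)
      have := (Finset.mem_filter.mp (hhG hx)).2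
      omega
    have hpr : (p : ℕ) ≤ G.card := by
      have : (Finset.Iio p).card ≤ G.card := Finset.card_le_card fun x hx => by
        have := Fin.lt_def.mp (Finset.mem_Iio.mp hx)
        exact Finset.mem_filter.mpr ⟨Finset.mem_univ _, Or.inl this⟩
      simpa using this
    have hqr : n - 1 - (q : ℕ) ≤ G.card := by
      have : (Finset.Ioi q).card ≤ G.card := Finset.card_le_card fun x hx => by
        have := Fin.lt_def.mp (Finset.mem_Ioi.mp hx)
        exact Finset.mem_filter.mpr ⟨Finset.mem_univ _, Or.inr this⟩
      simpa using this
    refine Finset.mem_image.mpr ⟨((p, n - 1 - q), (e.erase p).erase q), ?_, ?_⟩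
    · simp only [Finset.mem_product, Finset.mem_range, Finset.mem_powersetCard,
        Finset.subset_univ, true_and]
      refine ⟨⟨by omega, by omega⟩, ?_⟩
      rw [Finset.card_erase_of_mem (Finset.mem_erase.mpr ⟨hpq.symm, hq⟩),
        Finset.card_erase_of_mem hp, hec]
      omega
    · ext x
      simp only [Finset.mem_filter, Finset.mem_univ, true_and, Finset.mem_erase]
      constructor
      · rintro (h | h | h)
        · rwa [show x = p from Fin.ext h]
        · rwa [show x = q from Fin.ext (by omega)]
        · exact h.2.2
      · intro hx
        by_cases h1 : x = p
        · exact Or.inl (by rw [h1])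
        · by_cases h2 : x = q
          · exact Or.inr (Or.inl (by rw [h2]; omega))
          · exact Or.inr (Or.inr ⟨h2, h1, hx⟩)

/-! ### Asymptotics -/

lemma satNum_bounds {r n : ℕ} (hr : 2 ≤ r) (hn : 2 * r ≤ n) :
    (n - 1).choose (r - 1) ≤ satNum (M1r r) r n ∧
      satNum (M1r r) r n ≤ n.choose (r - 1) + r ^ 2 * n.choose (r - 2) := by
  obtain ⟨H, hH, hc⟩ := exists_isSat hr hn
  have hmem : H.card ∈ {k | ∃ H : Finset (Finset (Fin n)), IsSat (M1r r) r H ∧ H.card = k} :=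
    ⟨H, hH, rfl⟩
  refine ⟨?_, (Nat.sInf_le hmem).trans hc⟩
  obtain ⟨H', hH', hc'⟩ := Nat.sInf_mem ⟨_, hmem⟩
  rw [satNum, ← hc']
  exact hH'.choose_le_card hr hn

-- STATEMENT 0
theorem sat_M1r_asymptotic (r : ℕ) (hr : 2 ≤ r) :
    Filter.Tendsto (fun n : ℕ => (satNum (M1r r) r n : ℝ) / (n.choose (r - 1) : ℝ))
      Filter.atTop (nhds 1) := by
  obtain ⟨s, rfl⟩ : ∃ s, r = s + 2 := ⟨r - 2, by omega⟩
  have hlow : Filter.Tendsto (fun n : ℕ => 1 - ((s : ℝ) + 1) * (1 / (n : ℝ)))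
      Filter.atTop (nhds 1) := by
    simpa using (tendsto_one_div_atTop_nhds_zero_nat (𝕜 := ℝ)).const_mul ((s : ℝ) + 1)
      |>.const_sub 1
  have hup : Filter.Tendsto
      (fun n : ℕ => 1 + ((s : ℝ) + 2) ^ 2 * ((s : ℝ) + 1) * (1 / ((n - s : ℕ) : ℝ)))
      Filter.atTop (nhds 1) := by
    simpa using ((tendsto_one_div_atTop_nhds_zero_nat (𝕜 := ℝ)).comp
      (Filter.tendsto_sub_atTop_nat s)).const_mul (((s : ℝ) + 2) ^ 2 * ((s : ℝ) + 1))
      |>.const_add 1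
  refine tendsto_of_tendsto_of_tendsto_of_le_of_le' hlow hup ?_ ?_
  · filter_upwards [Filter.eventually_ge_atTop (2 * (s + 2))] with n hn
    have h := (satNum_bounds (r := s + 2) (by omega) hn).1
    have hC : (0 : ℝ) < n.choose (s + 1) := by exact_mod_cast Nat.choose_pos (by omega)
    have hn0 : (0 : ℝ) < n := by exact_mod_cast (by omega : 0 < n)
    rw [show s + 2 - 1 = s + 1 from rfl, le_div_iff₀ hC]
    refine le_trans (le_of_eq ?_) (Nat.cast_le.mpr h)
    -- the absorption identity `n * C(n-1, s+1) = (n-s-1) * C(n, s+1)`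
    obtain ⟨m, rfl⟩ : ∃ m, n = m + 1 := ⟨n - 1, by omega⟩
    have hid := Nat.choose_mul_succ_eq m (s + 1)
    have hid' : (m.choose (s + 1) : ℝ) * ((m : ℝ) + 1) =
        ((m + 1).choose (s + 1) : ℝ) * ((m : ℝ) + 1 - (s + 1)) := by
      have := congrArg (Nat.cast : ℕ → ℝ) hid
      rw [Nat.cast_mul, Nat.cast_mul, Nat.cast_sub (by omega)] at this
      push_cast at this
      exact this
    rw [show s + 2 - 1 = s + 1 from rfl, Nat.add_sub_cancel]
    push_cast at hn0 ⊢
    field_simp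
    linarith
  · filter_upwards [Filter.eventually_ge_atTop (2 * (s + 2))] with n hn
    have h := (satNum_bounds (r := s + 2) (by omega) hn).2
    have hC : (0 : ℝ) < n.choose (s + 1) := by exact_mod_cast Nat.choose_pos (by omega)
    have hn0 : (0 : ℝ) < ((n - s : ℕ) : ℝ) := by exact_mod_cast (by omega : 0 < n - s)
    rw [show s + 2 - 1 = s + 1 from rfl, div_le_iff₀ hC]
    refine (Nat.cast_le.mpr h).trans (le_of_eq ?_)
    have hid : (n.choose (s + 1) : ℝ) * ((s : ℝ) + 1) = n.choose s * ((n - s : ℕ) : ℝ) := by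
      exact_mod_cast Nat.choose_succ_right_eq n s
    rw [show s + 2 - 1 = s + 1 from rfl, Nat.add_sub_cancel]
    push_cast
    field_simp
    linear_combination (-((s : ℝ) + 2) ^ 2) * hid
end

section
/- For every n ≥ 6, sat_○(n, M_1^{(3)}) = C(n-1, 2) + 3n − 11. Moreover, the 3-cgh H_n^{(3)} consisting of all triples containing v_0 together with all triples containing one of the pairs {v_1, v_{n-2}}, {v_1, v_{n-1}} or {v_2, v_{n-1}} is M_1^{(3)}-saturated with exactly this many edges, and for n > 6 it is, up to isomorphism, the unique M_1^{(3)}-saturated 3-cgh on Ω_n with the minimum number of edges. -/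
/-!
An edge `f` is separated from a triple `e` exactly when `f` lies in one of the three open gaps that
`e` leaves on the circle. Fix a saturated family `H` and call an arc full if it contains an edge of
`H`. Disjoint arcs are never both full (`arcs_meet`), and a triple is missing from `H` exactly when
one of its gaps is full (`exists_gap`). If an arc and its complement both have at least three
points, exactly one of them is full (`hasArc_compl`).

Let `a_k` be the number of full arcs with `k` points. Then `a_k + a_{n-k} = n` for `3 ≤ k ≤ n - 3`,
and Katona's circle argument gives `a_k ≤ k` for `2k ≤ n` (`arcCount_le`). A gap with `k` points
belongs to `n - 2 - k` triples, so the number of missing triples is at most `∑ a_k (n - 2 - k)`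
(`choose_le_card_add`). Symmetrising `k ↔ n - k` shows that this sum is largest when `a_k = k` for
all `k` (`weighted_sum_nonneg`), where `C(n,3)` minus the sum equals the claimed number.

If equality holds and `n > 6`, then `a_3 = 3`, and three pairwise intersecting arcs with three
points are all the arcs with three points through some point `v` (`exists_center`). Every edge meets
each of these arcs, and the triples doing so form the copy of `H_n^{(3)}` centred at `v`
(`cghIso_of_center`).
-/

open Finset

/-! ### Separated triples -/

/-- For `a < b < c` and `p < q < r` in the linear order of `Fin n`: the triples `{a, b, c}` and
`{p, q, r}` lie in two disjoint arcs of the cyclic order. The six alternatives are the positions of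
the two triples relative to the point where the circle is cut into the linear order. -/
def ArcSep {n : ℕ} (a b c p q r : Fin n) : Prop :=
  c < p ∨ r < a ∨ (a < p ∧ r < b) ∨ (b < p ∧ r < c) ∨ (p < a ∧ c < q) ∨ (q < a ∧ c < r)

/-- A copy of `M_1^{(3)}` is a pair of separated triples. The rotation in `CyclicSorted` is one of
six, which correspond to the six alternatives of `ArcSep`. -/
lemma hasCopy_iff {n : ℕ} (H : Finset (Finset (Fin n))) :
    HasCopy M1cgh H ↔ ∃ a b c p q r : Fin n, a < b ∧ b < c ∧ p < q ∧ q < r ∧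
      {a, b, c} ∈ H ∧ {p, q, r} ∈ H ∧ ArcSep a b c p q r := by
  constructor
  · rintro ⟨f, -, ⟨k, hk⟩, he⟩
    change Fin 6 → Fin n at f
    change ∀ e ∈ ({{0, 1, 2}, {3, 4, 5}} : Finset (Finset (Fin 6))), e.image f ∈ H at he
    have h1 : ({f 0, f 1, f 2} : Finset (Fin n)) ∈ H := by
      simpa [Finset.image_insert] using he ({0, 1, 2} : Finset (Fin 6)) (by simp)
    have h2 : ({f 3, f 4, f 5} : Finset (Fin n)) ∈ H := by
      simpa [Finset.image_insert] using he ({3, 4, 5} : Finset (Fin 6)) (by simp)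
    have hl : List.ofFn f = [f 0, f 1, f 2, f 3, f 4, f 5] := by
      simp [List.ofFn_succ]
    have rot : ∀ x y z : Fin n, ({x, y, z} : Finset (Fin n)) = {y, z, x} := by
      intro x y z; ext; simp; tauto
    change ((List.ofFn f).rotate k).IsChain (· < ·) at hk
    rw [hl, ← List.rotate_mod] at hk
    have hk6 : k % [f 0, f 1, f 2, f 3, f 4, f 5].length < 6 := Nat.mod_lt _ (by simp)
    generalize k % [f 0, f 1, f 2, f 3, f 4, f 5].length = j at hk hk6
    interval_cases j <;> simp [List.rotate] at hk <;> obtain ⟨g1, g2, g3, g4, g5⟩ := hk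
    · exact ⟨_, _, _, _, _, _, g1, g2, g4, g5, h1, h2, by unfold ArcSep; omega⟩
    · exact ⟨_, _, _, _, _, _, g1, by omega, g3, g4, rot _ _ _ ▸ h1, h2, by unfold ArcSep; omega⟩
    · exact ⟨_, _, _, _, _, _, by omega, g5, g2, g3, rot _ _ _ ▸ rot _ _ _ ▸ h1, h2,
        by unfold ArcSep; omega⟩
    · exact ⟨_, _, _, _, _, _, g4, g5, g1, g2, h1, h2, by unfold ArcSep; omega⟩
    · exact ⟨_, _, _, _, _, _, g3, g4, g1, by omega, h1, rot _ _ _ ▸ h2, by unfold ArcSep; omega⟩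
    · exact ⟨_, _, _, _, _, _, g2, g3, by omega, g5, h1, rot _ _ _ ▸ rot _ _ _ ▸ h2,
        by unfold ArcSep; omega⟩
  · rintro ⟨a, b, c, p, q, r, hab, hbc, hpq, hqr, he, hf, hs⟩
    have key : ∀ x y z u v w : Fin n, ({x, y, z} : Finset (Fin n)) ∈ H →
        ({u, v, w} : Finset (Fin n)) ∈ H →
        (∃ k, ([x, y, z, u, v, w].rotate k).IsChain (· < ·)) → HasCopy M1cgh H := by
      rintro x y z u v w h1 h2 ⟨k, hk⟩
      have hl : List.ofFn (![x, y, z, u, v, w] : Fin 6 → Fin n) = [x, y, z, u, v, w] := by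
        simp [List.ofFn_succ]
      refine ⟨(![x, y, z, u, v, w] : Fin 6 → Fin n), ?_, ⟨k, ?_⟩, ?_⟩
      · have : (List.ofFn (![x, y, z, u, v, w] : Fin 6 → Fin n)).Nodup := by
          rw [hl, ← List.nodup_rotate (n := k)]
          exact (List.isChain_iff_pairwise.1 hk).imp (fun h => ne_of_lt h)
        exact List.nodup_ofFn.1 this
      · exact hl ▸ hk
      · change ∀ e ∈ ({{0, 1, 2}, {3, 4, 5}} : Finset (Finset (Fin 6))),
          e.image ![x, y, z, u, v, w] ∈ H
        intro e he
        rw [Finset.mem_insert, Finset.mem_singleton] at he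
        rcases he with rfl | rfl
        · simpa [Finset.image_insert] using h1
        · simpa [Finset.image_insert] using h2
    have rot : ∀ x y z : Fin n, ({x, y, z} : Finset (Fin n)) = {y, z, x} := by
      intro x y z; ext; simp; tauto
    rcases hs with h | h | ⟨h, h'⟩ | ⟨h, h'⟩ | ⟨h, h'⟩ | ⟨h, h'⟩
    · exact key a b c p q r he hf ⟨0, by simp [List.rotate, *]⟩
    · exact key a b c p q r he hf ⟨3, by simp [List.rotate, *]⟩
    · exact key b c a p q r (rot _ _ _ ▸ he) hf ⟨2, by simp [List.rotate, *]⟩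
    · exact key c a b p q r (rot _ _ _ ▸ rot _ _ _ ▸ he) hf ⟨1, by simp [List.rotate, *]⟩
    · exact key a b c q r p he (rot _ _ _ ▸ hf) ⟨5, by simp [List.rotate, *]⟩
    · exact key a b c r p q he (rot _ _ _ ▸ rot _ _ _ ▸ hf) ⟨4, by simp [List.rotate, *]⟩

lemma exists_sorted {n : ℕ} {e : Finset (Fin n)} (he : e.card = 3) :
    ∃ a b c : Fin n, a < b ∧ b < c ∧ e = {a, b, c} := by
  obtain ⟨x, y, z, hxy, hxz, hyz, rfl⟩ := Finset.card_eq_three.1 he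
  have : ∀ x y z : Fin n, x < y → (y < z ∨ (x < z ∧ z < y) ∨ z < x) →
      ∃ a b c : Fin n, a < b ∧ b < c ∧ ({x, y, z} : Finset (Fin n)) = {a, b, c} := by
    rintro x y z h (h' | ⟨h', h''⟩ | h')
    · exact ⟨x, y, z, h, h', rfl⟩
    · exact ⟨x, z, y, h', h'', by ext; simp; tauto⟩
    · exact ⟨z, x, y, h', h, by ext; simp; tauto⟩
  rcases lt_or_gt_of_ne hxy with h | h
  · exact this x y z h (by omega)
  · rw [Finset.insert_comm]
    exact this y x z h (by omega)

lemma sorted_triple_inj {n : ℕ} {a b c p q r : Fin n} (hab : a < b) (hbc : b < c)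
    (hpq : p < q) (hqr : q < r) (h : ({a, b, c} : Finset (Fin n)) = {p, q, r}) :
    a = p ∧ b = q ∧ c = r := by
  have h1 : a ∈ ({p, q, r} : Finset (Fin n)) := h ▸ by simp
  have h2 : b ∈ ({p, q, r} : Finset (Fin n)) := h ▸ by simp
  have h3 : c ∈ ({p, q, r} : Finset (Fin n)) := h ▸ by simp
  simp only [Finset.mem_insert, Finset.mem_singleton] at h1 h2 h3
  omega

/-- In a saturated family, a missing triple is separated from some edge. -/
lemma exists_arcSep_of_notMem {n : ℕ} {H : Finset (Finset (Fin n))} (hH : IsSat M1cgh 3 H)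
    {a b c : Fin n} (hab : a < b) (hbc : b < c) (he : {a, b, c} ∉ H) :
    ∃ p q r, p < q ∧ q < r ∧ {p, q, r} ∈ H ∧ ArcSep a b c p q r := by
  have hc := hH.2.2 {a, b, c} (Finset.card_eq_three.2
    ⟨a, b, c, hab.ne, (hab.trans hbc).ne, hbc.ne, rfl⟩) he
  obtain ⟨a', b', c', p, q, r, h1, h2, h3, h4, h5, h6, hs⟩ := (hasCopy_iff _).1 hc
  rcases Finset.mem_insert.1 h5 with g5 | g5 <;> rcases Finset.mem_insert.1 h6 with g6 | g6
  · have := sorted_triple_inj h1 h2 hab hbc g5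
    have := sorted_triple_inj h3 h4 hab hbc g6
    unfold ArcSep at hs
    omega
  · obtain ⟨i1, i2, i3⟩ := sorted_triple_inj h1 h2 hab hbc g5
    exact ⟨p, q, r, h3, h4, g6, i1 ▸ i2 ▸ i3 ▸ hs⟩
  · obtain ⟨i1, i2, i3⟩ := sorted_triple_inj h3 h4 hab hbc g6
    exact ⟨a', b', c', h1, h2, g5, by unfold ArcSep at hs ⊢; omega⟩
  · exact absurd ((hasCopy_iff _).2 ⟨a', b', c', p, q, r, h1, h2, h3, h4, g5, g6, hs⟩) hH.2.1

/-! ### Clockwise distances and arcs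

The clockwise distance from `s` to `x` is `(x - s).val`, so the arc with first point `s` and `k`
points is `{x | (x - s).val < k}`. -/

lemma sub_val {n : ℕ} (a b : Fin n) :
    b.val ≤ a.val ∧ (a - b).val = a.val - b.val ∨
      a.val < b.val ∧ (a - b).val = n + a.val - b.val := by
  rw [Fin.sub_def]
  have := a.2
  have := b.2
  by_cases h : b.val ≤ a.val
  · have : n - b.val + a.val = n + (a.val - b.val) := by omega
    simp only [this, Nat.add_mod_left]
    rw [Nat.mod_eq_of_lt (by omega)]
    omega
  · simp only
    rw [Nat.mod_eq_of_lt (by omega)]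
    omega

/-- The clockwise distance from `u` to `x`, in terms of the distances from a base point `s`. -/
lemma sub_val' {n : ℕ} [NeZero n] (s x u : Fin n) :
    (u - s).val ≤ (x - s).val ∧ (x - u).val = (x - s).val - (u - s).val ∨
      (x - s).val < (u - s).val ∧ (x - u).val = n + (x - s).val - (u - s).val := by
  have := sub_val (x - s) (u - s)
  rwa [sub_sub_sub_cancel_right] at this

lemma add_cast_sub_val {n : ℕ} [NeZero n] (s : Fin n) {j : ℕ} (hj : j < n) :
    (s + Fin.ofNat n j - s).val = j := by
  rw [add_sub_cancel_left, Fin.val_ofNat, Nat.mod_eq_of_lt hj]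

/-- The arc with first point `s` and `k` points contains an edge of `H`. -/
def HasArc {n : ℕ} (H : Finset (Finset (Fin n))) (k : ℕ) (s : Fin n) : Prop :=
  ∃ e ∈ H, ∀ x ∈ e, (x - s).val < k

/-- No arc separates two edges of a saturated family. -/
lemma arcs_meet {n : ℕ} {H : Finset (Finset (Fin n))} (hH : IsSat M1cgh 3 H)
    {k : ℕ} {s : Fin n} {e f : Finset (Fin n)} (he : e ∈ H) (hf : f ∈ H)
    (hes : ∀ x ∈ e, (x - s).val < k) (hfs : ∀ x ∈ f, k ≤ (x - s).val) : False := by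
  obtain ⟨a, b, c, hab, hbc, rfl⟩ := exists_sorted (hH.1 e he)
  obtain ⟨p, q, r, hpq, hqr, rfl⟩ := exists_sorted (hH.1 f hf)
  refine hH.2.1 ((hasCopy_iff H).2 ⟨a, b, c, p, q, r, hab, hbc, hpq, hqr, he, hf, ?_⟩)
  simp only [Finset.mem_insert, Finset.mem_singleton, forall_eq_or_imp, forall_eq] at hes hfs
  have := sub_val a s
  have := sub_val b s
  have := sub_val c s
  have := sub_val p s
  have := sub_val q s
  have := sub_val r s
  unfold ArcSep
  omega

/-- One of the three open gaps `(u, v)` of a missing triple contains an edge. Its vertices are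
listed in the cyclic order `u, v, w`, which is what the equation for the distances expresses. -/
lemma exists_gap {n : ℕ} {H : Finset (Finset (Fin n))} (hH : IsSat M1cgh 3 H)
    {e : Finset (Fin n)} (hc : e.card = 3) (he : e ∉ H) :
    ∃ u v w : Fin n, e = {u, v, w} ∧ (v - u).val + (w - v).val + (u - w).val = n ∧
      0 < (w - v).val ∧ 0 < (u - w).val ∧ 4 ≤ (v - u).val ∧
      ∃ f ∈ H, ∀ x ∈ f, 0 < (x - u).val ∧ (x - u).val < (v - u).val := by
  obtain ⟨a, b, c, hab, hbc, rfl⟩ := exists_sorted hc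
  obtain ⟨p, q, r, hpq, hqr, hf, hs⟩ := exists_arcSep_of_notMem hH hab hbc he
  have main : ∀ u v w : Fin n, ({a, b, c} : Finset (Fin n)) = {u, v, w} →
      (v - u).val + (w - v).val + (u - w).val = n → 0 < (w - v).val → 0 < (u - w).val →
      (∀ x, x = p ∨ x = q ∨ x = r → 0 < (x - u).val ∧ (x - u).val < (v - u).val) →
      ∃ u v w : Fin n, ({a, b, c} : Finset (Fin n)) = {u, v, w} ∧
        (v - u).val + (w - v).val + (u - w).val = n ∧
        0 < (w - v).val ∧ 0 < (u - w).val ∧ 4 ≤ (v - u).val ∧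
        ∃ f ∈ H, ∀ x ∈ f, 0 < (x - u).val ∧ (x - u).val < (v - u).val := by
    intro u v w h h' hw hu hx
    refine ⟨u, v, w, h, h', hw, hu, ?_, _, hf, by simpa using hx⟩
    have := hx p (by simp)
    have := hx q (by simp)
    have := hx r (by simp)
    have := sub_val p u
    have := sub_val q u
    have := sub_val r u
    omega
  have hba : (b - a).val = b.val - a.val := by have := sub_val b a; omega
  have hcb : (c - b).val = c.val - b.val := by have := sub_val c b; omega
  have hac : (a - c).val = n + a.val - c.val := by have := sub_val a c; omega
  have hsum : 0 < (b - a).val ∧ 0 < (c - b).val ∧ 0 < (a - c).val ∧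
      (b - a).val + (c - b).val + (a - c).val = n := by omega
  by_cases hA : a < p ∧ r < b
  · refine main a b c rfl (by clear hs main; omega)
      (by clear hs main; omega) (by clear hs main; omega) ?_
    clear hsum main
    intro x hx
    have : a < x ∧ x < b := by clear * - hA hpq hqr hx; omega
    have := sub_val x a
    omega
  by_cases hB : b < p ∧ r < c
  · refine main b c a (by ext; simp; tauto) (by clear hs main; omega)
      (by clear hs main; omega) (by clear hs main; omega) ?_
    clear hsum main
    intro x hx
    have : b < x ∧ x < c := by clear * - hB hpq hqr hx; omega
    have := sub_val x b
    omega
  · refine main c a b (by ext; simp; tauto) (by clear hs main; omega)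
      (by clear hs main; omega) (by clear hs main; omega) ?_
    clear hsum main
    intro x hx
    have : x < a ∨ c < x := by
      unfold ArcSep at hs
      clear * - hA hB hs hpq hqr hx
      omega
    have := sub_val x c
    omega

/-- Of an arc and its complement, both with at least three points, exactly one contains an edge.
At least one does because the triple made of the two ends of the arc and an interior point is either
an edge inside the arc, or missing and then one of its gaps contains an edge. -/
lemma hasArc_compl {n : ℕ} [NeZero n] {H : Finset (Finset (Fin n))} (hH : IsSat M1cgh 3 H)
    {k : ℕ} (hk : 3 ≤ k) (hkn : k + 3 ≤ n) (s : Fin n) :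
    HasArc H (n - k) (s + Fin.ofNat n k) ↔ ¬ HasArc H k s := by
  have hK := add_cast_sub_val s (show k < n by omega)
  constructor
  · rintro ⟨f, hf, hfx⟩ ⟨e, he, hex⟩
    refine arcs_meet hH he hf hex fun x hx => ?_
    have := hfx x hx
    have := sub_val' s x (s + Fin.ofNat n k)
    omega
  · intro hA
    have h0 : (s - s).val = 0 := by simp
    have h1 := add_cast_sub_val s (show 1 < n by omega)
    have h2 := add_cast_sub_val s (show k - 1 < n by omega)
    set y := s + Fin.ofNat n 1 with hy
    set z := s + Fin.ofNat n (k - 1) with hz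
    have hc : ({s, y, z} : Finset (Fin n)).card = 3 := by
      refine Finset.card_eq_three.2 ⟨s, y, z, ?_, ?_, ?_, rfl⟩ <;> intro h
      · rw [← h] at h1; omega
      · rw [← h] at h2; omega
      · rw [← h] at h2; omega
    have he : ({s, y, z} : Finset (Fin n)) ∉ H := by
      intro h
      refine hA ⟨_, h, ?_⟩
      simp only [Finset.mem_insert, Finset.mem_singleton, forall_eq_or_imp, forall_eq]
      omega
    obtain ⟨u, v, w, huvw, hsum, hw, hu, -, f, hf, hfx⟩ := exists_gap hH hc he
    have mem : ∀ x ∈ ({s, y, z} : Finset (Fin n)),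
        (x - s).val = 0 ∨ (x - s).val = 1 ∨ (x - s).val = k - 1 := by
      simp only [Finset.mem_insert, Finset.mem_singleton, forall_eq_or_imp, forall_eq]
      omega
    have m1 := mem u (huvw ▸ by simp)
    have m2 := mem v (huvw ▸ by simp)
    have m3 := mem w (huvw ▸ by simp)
    have i1 := sub_val' s v u
    have i2 := sub_val' s w v
    have i3 := sub_val' s u w
    by_cases hU : (u - s).val = k - 1
    · refine ⟨f, hf, fun x hx => ?_⟩
      have := hfx x hx
      have := sub_val' s x u
      have := sub_val' s x (s + Fin.ofNat n k)
      have := (x - s).2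
      omega
    · refine absurd ⟨f, hf, fun x hx => ?_⟩ hA
      have := hfx x hx
      have := sub_val' s x u
      have := (x - s).2
      omega

/-! ### Counting arcs that contain an edge -/

open Classical in
/-- The number of arcs with `k` points that contain an edge of `H`. An arc is identified with its
first point, which is faithful for `k < n`. -/
noncomputable def arcCount {n : ℕ} (H : Finset (Finset (Fin n))) (k : ℕ) : ℕ :=
  (Finset.univ.filter (HasArc H k)).card

lemma arcCount_compl {n : ℕ} {H : Finset (Finset (Fin n))} (hH : IsSat M1cgh 3 H)
    {k : ℕ} (hk : 3 ≤ k) (hkn : k + 3 ≤ n) : arcCount H k + arcCount H (n - k) = n := by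
  classical
  have : NeZero n := ⟨by omega⟩
  have h : arcCount H (n - k) = (Finset.univ.filter fun s => ¬ HasArc H k s).card := by
    symm
    refine Finset.card_bij (fun s _ => s + Fin.ofNat n k) ?_ ?_ ?_
    · intro s hs
      rw [Finset.mem_filter] at hs ⊢
      exact ⟨Finset.mem_univ _, (hasArc_compl hH hk hkn s).2 hs.2⟩
    · intro s _ t _ h
      exact add_right_cancel h
    · intro t ht
      refine ⟨t - Fin.ofNat n k, ?_, sub_add_cancel _ _⟩
      rw [Finset.mem_filter] at ht ⊢
      rw [← hasArc_compl hH hk hkn, sub_add_cancel]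
      exact ⟨Finset.mem_univ _, ht.2⟩
  rw [h, arcCount]
  simpa using Finset.card_filter_add_card_filter_not (s := (Finset.univ : Finset (Fin n)))
    (HasArc H k)

lemma arcs_close {n : ℕ} [NeZero n] {H : Finset (Finset (Fin n))} (hH : IsSat M1cgh 3 H)
    {k : ℕ} {s t : Fin n} (hs : HasArc H k s) (ht : HasArc H k t) :
    (t - s).val < k ∨ (s - t).val < k := by
  obtain ⟨e, he, hex⟩ := hs
  obtain ⟨f, hf, hfx⟩ := ht
  by_contra hlt
  refine arcs_meet hH he hf hex fun x hx => ?_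
  have := hfx x hx
  have := sub_val' s x t
  have := sub_val' s s t
  have h0 : (s - s).val = 0 := by simp
  omega

/-- Katona's circle argument: pairwise intersecting arcs with `k ≤ n / 2` points number at most `k`.
Relative to a fixed arc of the family, the other first points come in `k - 1` pairs whose two arcs
are disjoint. -/
lemma arcCount_le {n : ℕ} {H : Finset (Finset (Fin n))} (hH : IsSat M1cgh 3 H)
    {k : ℕ} (hk : 2 * k ≤ n) : arcCount H k ≤ k := by
  classical
  unfold arcCount
  rcases Finset.eq_empty_or_nonempty (Finset.univ.filter (HasArc H k)) with h | ⟨s, hs⟩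
  · simp [h]
  have : NeZero n := ⟨by have := s.2; omega⟩
  have hs' := (Finset.mem_filter.1 hs).2
  have h0 : (s - s).val = 0 := by simp
  refine le_trans (Finset.card_le_card_of_injOn (t := Finset.range k)
    -- The offsets `i` and `i + n - k`, for `0 < i < k`, form a pair of disjoint arcs.
    (fun t => if (t - s).val < k then (t - s).val else (t - s).val + k - n) ?_ ?_) (by simp)
  · intro t ht
    have ht' := (Finset.mem_filter.1 ht).2
    have := arcs_close hH hs' ht'
    have := sub_val' s s t
    have := (t - s).2
    have : 0 < k := by omega
    simp only [Finset.coe_range, Set.mem_Iio]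
    split_ifs <;> omega
  · intro t ht t' ht' h
    have ht := (Finset.mem_filter.1 ht).2
    have ht' := (Finset.mem_filter.1 ht').2
    have := arcs_close hH ht ht'
    have := arcs_close hH hs' ht
    have := arcs_close hH hs' ht'
    have := sub_val' s s t
    have := sub_val' s s t'
    have := sub_val' s t t'
    have := sub_val' s t' t
    have := (t - s).2
    have := (t' - s).2
    have key : (t - s).val = (t' - s).val := by
      simp only at h
      split_ifs at h <;> omega
    exact sub_left_injective (Fin.ext key)

/-! ### The lower bound -/

/-- Every missing triple is determined by a gap that contains an edge, with `j + 3` points say, and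
by its third vertex, for which `m + 1 - j` places remain. -/
lemma choose_le_card_add {m : ℕ} {H : Finset (Finset (Fin (m + 6)))} (hH : IsSat M1cgh 3 H) :
    (m + 6).choose 3 ≤
      H.card + ∑ j ∈ Finset.range (m + 1), arcCount H (j + 3) * (m + 1 - j) := by
  classical
  set T : Finset (Finset (Fin (m + 6))) := (Finset.range (m + 1)).biUnion fun j =>
    ((Finset.univ.filter (HasArc H (j + 3))) ×ˢ Finset.range (m + 1 - j)).image fun p =>
      {p.1 - Fin.ofNat _ 1, p.1 - Fin.ofNat _ 1 + Fin.ofNat _ (j + 4),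
        p.1 - Fin.ofNat _ 1 + Fin.ofNat _ (j + 5 + p.2)} with hT
  have hTc : T.card ≤ ∑ j ∈ Finset.range (m + 1), arcCount H (j + 3) * (m + 1 - j) := by
    refine Finset.card_biUnion_le.trans (Finset.sum_le_sum fun j _ => ?_)
    refine Finset.card_image_le.trans ?_
    rw [Finset.card_product, Finset.card_range, arcCount]
  have hsub : Finset.powersetCard 3 (Finset.univ : Finset (Fin (m + 6))) ⊆ H ∪ T := by
    intro e he
    rw [Finset.mem_powersetCard] at he
    rw [Finset.mem_union, or_iff_not_imp_left]
    intro heH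
    obtain ⟨u, v, w, rfl, hsum, hw, hu, hv, f, hf, hfx⟩ := exists_gap hH he.2 heH
    have hrep : ∀ x : Fin (m + 6), u + Fin.ofNat _ (x - u).val = x := by
      intro x
      rw [Fin.ofNat_val_eq_self, add_sub_cancel]
    have hone := add_cast_sub_val u (show 1 < m + 6 by omega)
    have hwu := sub_val' u w v
    have hww := sub_val' u u w
    have h0 : (u - u).val = 0 := by simp
    simp only [hT, Finset.mem_biUnion, Finset.mem_image, Finset.mem_product, Finset.mem_filter,
      Finset.mem_range, Finset.mem_univ, true_and]
    refine ⟨(v - u).val - 4, by omega, (u + Fin.ofNat _ 1, (w - v).val - 1), ⟨⟨f, hf, ?_⟩, ?_⟩, ?_⟩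
    · intro x hx
      have := hfx x hx
      have := sub_val' u x (u + Fin.ofNat _ 1)
      change (x - (u + Fin.ofNat _ 1)).val < (v - u).val - 4 + 3
      omega
    · simp only; omega
    · simp only [add_sub_cancel_right]
      rw [show (v - u).val - 4 + 4 = (v - u).val by omega,
        show (v - u).val - 4 + 5 + ((w - v).val - 1) = (w - u).val by omega, hrep, hrep]
  have h1 := Finset.card_le_card hsub
  rw [Finset.card_powersetCard, Finset.card_univ, Fintype.card_fin] at h1
  exact h1.trans ((Finset.card_union_le _ _).trans (by omega))

/-- Pairing `j` with `m - j` turns twice the sum into `∑ d j * (m - 2 * j)`, whose terms are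
nonnegative. -/
lemma weighted_sum_nonneg (m : ℕ) (d : ℕ → ℤ) (hd : ∀ j ≤ m, d j + d (m - j) = 0)
    (hp : ∀ j, 2 * j ≤ m → 0 ≤ d j) :
    0 ≤ ∑ j ∈ Finset.range (m + 1), d j * (m + 1 - j) ∧
      (∑ j ∈ Finset.range (m + 1), d j * (m + 1 - j) = 0 → 0 < m → d 0 = 0) := by
  have hterm : ∀ j ∈ Finset.range (m + 1), 0 ≤ d j * (m - 2 * j) := by
    intro j hj
    have hj : j ≤ m := by rw [Finset.mem_range] at hj; omega
    rcases le_total (2 * j) m with h | h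
    · exact mul_nonneg (hp j h) (by have : (2 * j : ℤ) ≤ m := by exact_mod_cast h
                                    linarith)
    · have h1 := hp (m - j) (by omega)
      have h2 := hd j hj
      have h3 : (m : ℤ) ≤ 2 * j := by exact_mod_cast h
      exact mul_nonneg_of_nonpos_of_nonpos (by linarith) (by linarith)
  have hdouble : 2 * ∑ j ∈ Finset.range (m + 1), d j * (m + 1 - j) =
      ∑ j ∈ Finset.range (m + 1), d j * (m - 2 * j) := by
    have hr := Finset.sum_range_reflect (fun j : ℕ => d j * ((m : ℤ) + 1 - j)) (m + 1)
    rw [two_mul]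
    nth_rewrite 1 [← hr]
    rw [← Finset.sum_add_distrib]
    refine Finset.sum_congr rfl fun j hj => ?_
    have hj : j ≤ m := by rw [Finset.mem_range] at hj; omega
    have h2 := hd j hj
    rw [show m + 1 - 1 - j = m - j by omega, Nat.cast_sub hj,
      show d (m - j) = - d j by linarith]
    ring
  have h0 := Finset.sum_nonneg hterm
  refine ⟨by linarith, fun hz hm => ?_⟩
  rw [hz, mul_zero, eq_comm, Finset.sum_eq_zero_iff_of_nonneg hterm] at hdouble
  have := hdouble 0 (by simp)
  simpa [hm.ne'] using this

lemma sum_closed_form (m : ℕ) :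
    (∑ j ∈ Finset.range (m + 1), ((j : ℤ) + 3) * (m + 1 - j)) +
      ((m + 5).choose 2 + 3 * m + 7 : ℕ) = ((m + 6).choose 3 : ℕ) := by
  have h1 : ∀ N : ℕ, 6 * ∑ j ∈ Finset.range N, ((j : ℤ) + 3) * (m + 1 - j) =
      (3 * m - 6) * (N * (N - 1)) - N * (N - 1) * (2 * N - 1) + 18 * (m + 1) * N := by
    intro N
    induction N with
    | zero => simp
    | succ N ih => rw [Finset.sum_range_succ, mul_add, ih]; push_cast; ring
  have h2 : ∀ k : ℕ, (2 : ℤ) * ((k + 1).choose 2 : ℕ) = (k + 1) * k := by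
    intro k
    induction k with
    | zero => simp
    | succ k ih => rw [Nat.choose_succ_succ, Nat.choose_one_right]; push_cast at ih ⊢; linarith
  have h3 : ∀ k : ℕ, (6 : ℤ) * ((k + 2).choose 3 : ℕ) = (k + 2) * (k + 1) * k := by
    intro k
    induction k with
    | zero => simp
    | succ k ih =>
      have := h2 (k + 1)
      rw [Nat.choose_succ_succ]
      push_cast at ih this ⊢
      linarith
  have e1 := h1 (m + 1)
  have e2 := h2 (m + 4)
  have e3 := h3 (m + 4)
  push_cast at e1 e2 e3 ⊢
  linarith

/-- The bound for `n = m + 6`, and what equality says about arcs with three points. The weighted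
sum is applied to the defect `j + 3 - arcCount H (j + 3)`, the difference from the family of all
arcs through a fixed point. -/
lemma card_ge_and_arcCount_three {m : ℕ} {H : Finset (Finset (Fin (m + 6)))}
    (hH : IsSat M1cgh 3 H) :
    (m + 5).choose 2 + 3 * m + 7 ≤ H.card ∧
      (H.card = (m + 5).choose 2 + 3 * m + 7 → 0 < m → arcCount H 3 = 3) := by
  have hw := weighted_sum_nonneg m (fun j => (j : ℤ) + 3 - arcCount H (j + 3)) ?_ ?_
  · have h1 := choose_le_card_add hH
    have h2 := sum_closed_form m
    have h3 : (∑ j ∈ Finset.range (m + 1), ((j : ℤ) + 3 - arcCount H (j + 3)) * (m + 1 - j)) =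
        (∑ j ∈ Finset.range (m + 1), ((j : ℤ) + 3) * (m + 1 - j)) -
        ((∑ j ∈ Finset.range (m + 1), arcCount H (j + 3) * (m + 1 - j) : ℕ) : ℤ) := by
      rw [Nat.cast_sum, ← Finset.sum_sub_distrib]
      refine Finset.sum_congr rfl fun j hj => ?_
      have hj : j ≤ m + 1 := by rw [Finset.mem_range] at hj; omega
      rw [Nat.cast_mul, Nat.cast_sub hj]
      push_cast
      ring
    obtain ⟨hw1, hw2⟩ := hw
    rw [h3] at hw1 hw2
    refine ⟨by omega, fun hc hm => ?_⟩
    have := hw2 (by omega) hm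
    simp only [Nat.cast_zero, zero_add] at this
    omega
  · intro j hj
    have := arcCount_compl hH (k := j + 3) (by omega) (by omega)
    rw [show m + 6 - (j + 3) = m - j + 3 by omega] at this
    omega
  · intro j hj
    have := arcCount_le hH (k := j + 3) (by omega)
    omega

/-! ### The extremal family -/

lemma triple_mem_Hn3 {n : ℕ} (hn : 6 ≤ n) {a b c : Fin n} (hab : a < b) (hbc : b < c) :
    {a, b, c} ∈ Hn3 n hn ↔ a.val = 0 ∨ (a.val = 1 ∧ n - 2 ≤ c.val) ∨
      (a.val = 2 ∧ c.val = n - 1) := by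
  have hc : ({a, b, c} : Finset (Fin n)).card = 3 :=
    Finset.card_eq_three.2 ⟨a, b, c, hab.ne, (hab.trans hbc).ne, hbc.ne, rfl⟩
  simp only [Hn3, Finset.mem_filter, Finset.mem_powersetCard, hc, Finset.subset_univ, true_and,
    Finset.mem_insert, Finset.mem_singleton, Fin.ext_iff]
  omega

/-- For maximality, a missing triple has a gap containing one of `{v_0, v_1, v_2}`,
`{v_0, v_1, v_{n-1}}`, `{v_0, v_{n-2}, v_{n-1}}`. -/
lemma Hn3_isSat (n : ℕ) (hn : 6 ≤ n) : IsSat M1cgh 3 (Hn3 n hn) := by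
  refine ⟨fun h hh => ?_, fun h => ?_, fun e he heH => ?_⟩
  · exact (Finset.mem_powersetCard.1 (Finset.mem_filter.1 hh).1).2
  · obtain ⟨a, b, c, p, q, r, hab, hbc, hpq, hqr, he, hf, hs⟩ := (hasCopy_iff _).1 h
    rw [triple_mem_Hn3 hn hab hbc] at he
    rw [triple_mem_Hn3 hn hpq hqr] at hf
    unfold ArcSep at hs
    omega
  · obtain ⟨a, b, c, hab, hbc, rfl⟩ := exists_sorted he
    rw [triple_mem_Hn3 hn hab hbc] at heH
    rw [hasCopy_iff]
    have main : ∀ p q r : Fin n, p < q → q < r → p.val = 0 → ArcSep a b c p q r →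
        ∃ a' b' c' p q r : Fin n, a' < b' ∧ b' < c' ∧ p < q ∧ q < r ∧
          {a', b', c'} ∈ insert {a, b, c} (Hn3 n hn) ∧
          {p, q, r} ∈ insert {a, b, c} (Hn3 n hn) ∧ ArcSep a' b' c' p q r := by
      intro p q r hpq hqr hp hs
      exact ⟨a, b, c, p, q, r, hab, hbc, hpq, hqr, Finset.mem_insert_self _ _,
        Finset.mem_insert_of_mem ((triple_mem_Hn3 hn hpq hqr).2 (Or.inl hp)), hs⟩
    have cases : 3 ≤ a.val ∨ a.val = 2 ∧ c.val < n - 1 ∨ a.val = 1 ∧ c.val < n - 2 := by omega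
    rcases cases with h | h | h
    · refine main ⟨0, by omega⟩ ⟨1, by omega⟩ ⟨2, by omega⟩ ?_ ?_ rfl ?_ <;>
        simp only [ArcSep, Fin.lt_def] <;> omega
    · refine main ⟨0, by omega⟩ ⟨1, by omega⟩ ⟨n - 1, by omega⟩ ?_ ?_ rfl ?_ <;>
        simp only [ArcSep, Fin.lt_def] <;> omega
    · refine main ⟨0, by omega⟩ ⟨n - 2, by omega⟩ ⟨n - 1, by omega⟩ ?_ ?_ rfl ?_ <;>
        simp only [ArcSep, Fin.lt_def] <;> omega

lemma Hn3_card_le (n : ℕ) (hn : 6 ≤ n) : (Hn3 n hn).card ≤ (n - 1).choose 2 + 3 * n - 11 := by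
  classical
  have hsub : Hn3 n hn ⊆
      (Finset.powersetCard 2 (Finset.univ.erase (⟨0, by omega⟩ : Fin n))).image
          (insert (⟨0, by omega⟩ : Fin n)) ∪
        ((Finset.Ioo (⟨1, by omega⟩ : Fin n) ⟨n - 2, by omega⟩).image
            (fun b => {⟨1, by omega⟩, b, ⟨n - 2, by omega⟩}) ∪
          ((Finset.Ioo (⟨1, by omega⟩ : Fin n) ⟨n - 1, by omega⟩).image
            (fun b => {⟨1, by omega⟩, b, ⟨n - 1, by omega⟩}) ∪
          (Finset.Ioo (⟨2, by omega⟩ : Fin n) ⟨n - 1, by omega⟩).image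
            (fun b => {⟨2, by omega⟩, b, ⟨n - 1, by omega⟩}))) := by
    intro e he
    obtain ⟨a, b, c, hab, hbc, rfl⟩ := exists_sorted ((Hn3_isSat n hn).1 e he)
    rw [triple_mem_Hn3 hn hab hbc] at he
    have hc := c.2
    rw [Fin.lt_def] at hab hbc
    have cases : a.val = 0 ∨ (a.val = 1 ∧ c.val = n - 2) ∨ (a.val = 1 ∧ c.val = n - 1) ∨
      (a.val = 2 ∧ c.val = n - 1) := by omega
    simp only [Finset.mem_union, Finset.mem_image, Finset.mem_Ioo, Fin.lt_def]
    rcases cases with h | ⟨h, h'⟩ | ⟨h, h'⟩ | ⟨h, h'⟩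
    · refine Or.inl ⟨{b, c}, ?_, ?_⟩
      · rw [Finset.mem_powersetCard]
        refine ⟨fun x hx => ?_, Finset.card_pair (by rw [Ne, Fin.ext_iff]; omega)⟩
        simp only [Finset.mem_insert, Finset.mem_singleton, Finset.mem_erase, Finset.mem_univ,
          and_true, Ne, Fin.ext_iff] at hx ⊢
        omega
      · rw [show a = ⟨0, by omega⟩ from Fin.ext h]
    · refine Or.inr (Or.inl ⟨b, by omega, ?_⟩)
      rw [show a = ⟨1, by omega⟩ from Fin.ext h, show c = ⟨n - 2, by omega⟩ from Fin.ext h']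
    · refine Or.inr (Or.inr (Or.inl ⟨b, by omega, ?_⟩))
      rw [show a = ⟨1, by omega⟩ from Fin.ext h, show c = ⟨n - 1, by omega⟩ from Fin.ext h']
    · refine Or.inr (Or.inr (Or.inr ⟨b, by omega, ?_⟩))
      rw [show a = ⟨2, by omega⟩ from Fin.ext h, show c = ⟨n - 1, by omega⟩ from Fin.ext h']
  refine (Finset.card_le_card hsub).trans ?_
  refine (Finset.card_union_le _ _).trans ?_
  have h1 : ((Finset.powersetCard 2 (Finset.univ.erase (⟨0, by omega⟩ : Fin n))).image
      (insert (⟨0, by omega⟩ : Fin n))).card ≤ (n - 1).choose 2 := by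
    refine Finset.card_image_le.trans (le_of_eq ?_)
    rw [Finset.card_powersetCard, Finset.card_erase_of_mem (Finset.mem_univ _),
      Finset.card_univ, Fintype.card_fin]
  have h2 : ∀ (a c : Fin n) (g : Fin n → Finset (Fin n)),
      ((Finset.Ioo a c).image g).card ≤ c.val - a.val - 1 := fun a c g =>
    Finset.card_image_le.trans (Fin.card_Ioo a c).le
  have h3 := (Finset.card_union_le _ _).trans (Nat.add_le_add
    (h2 ⟨1, by omega⟩ ⟨n - 2, by omega⟩ (fun b => {⟨1, by omega⟩, b, ⟨n - 2, by omega⟩}))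
    ((Finset.card_union_le _ _).trans (Nat.add_le_add
      (h2 ⟨1, by omega⟩ ⟨n - 1, by omega⟩ (fun b => {⟨1, by omega⟩, b, ⟨n - 1, by omega⟩}))
      (h2 ⟨2, by omega⟩ ⟨n - 1, by omega⟩ (fun b => {⟨2, by omega⟩, b, ⟨n - 1, by omega⟩})))))
  refine (Nat.add_le_add h1 h3).trans ?_
  simp only
  omega

/-! ### Uniqueness -/

/-- Three pairwise intersecting arcs with three points on more than six points are the three such
arcs through a common point, here `v`; their first points are `v`, `s = v - 1`, `t = v - 2`. -/
lemma exists_center {n : ℕ} [NeZero n] (hn : 6 < n) {H : Finset (Finset (Fin n))}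
    (hH : IsSat M1cgh 3 H) (h3 : arcCount H 3 = 3) :
    ∃ v s t : Fin n, HasArc H 3 v ∧ HasArc H 3 s ∧ HasArc H 3 t ∧
      (s - v).val = n - 1 ∧ (t - v).val = n - 2 := by
  classical
  obtain ⟨x, y, z, hxy, hxz, hyz, hxyz⟩ := Finset.card_eq_three.1 h3
  have mem : ∀ s, s = x ∨ s = y ∨ s = z → HasArc H 3 s := by
    intro s hs
    have : s ∈ Finset.univ.filter (HasArc H 3) := by rw [hxyz]; simpa using hs
    exact (Finset.mem_filter.1 this).2
  have hx := mem x (by simp)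
  have hy := mem y (by simp)
  have hz := mem z (by simp)
  have c1 := arcs_close hH hx hy
  have c2 := arcs_close hH hx hz
  have c3 := arcs_close hH hy hz
  have i1 := sub_val' x x y
  have i2 := sub_val' x x z
  have i3 := sub_val' x y z
  have i4 := sub_val' x z y
  have h0 : (x - x).val = 0 := by simp
  have pos : ∀ a b : Fin n, a ≠ b → 0 < (b - a).val := by
    intro a b hab
    rw [Nat.pos_iff_ne_zero, Ne, Fin.val_eq_zero_iff, sub_eq_zero]
    exact hab.symm
  have p1 := pos x y hxy
  have p2 := pos x z hxz
  have p3 := pos y z hyz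
  have p4 := pos z y hyz.symm
  have b1 := (y - x).2
  have b2 := (z - x).2
  rw [h0] at i1 i2
  have hY : (y - x).val = 1 ∨ (y - x).val = 2 ∨ (y - x).val = n - 1 ∨ (y - x).val = n - 2 := by
    clear c2 c3 i2 i3 i4
    omega
  have hZ : (z - x).val = 1 ∨ (z - x).val = 2 ∨ (z - x).val = n - 1 ∨ (z - x).val = n - 2 := by
    clear c1 c3 i1 i3 i4
    omega
  have hX : (x - y).val = n - (y - x).val := by omega
  have hX' : (x - z).val = n - (z - x).val := by omega
  clear c1 c2 i1 i2
  rcases hY with hY | hY | hY | hY <;> rcases hZ with hZ | hZ | hZ | hZ <;>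
    first
    | exact ⟨x, y, z, hx, hy, hz, by omega, by omega⟩
    | exact ⟨x, z, y, hx, hz, hy, by omega, by omega⟩
    | exact ⟨y, x, z, hy, hx, hz, by omega, by omega⟩
    | exact ⟨y, z, x, hy, hz, hx, by omega, by omega⟩
    | exact ⟨z, x, y, hz, hx, hy, by omega, by omega⟩
    | exact ⟨z, y, x, hz, hy, hx, by omega, by omega⟩

/-- A triple that meets all three arcs of three points through `v` is, after rotating `v` to `v_0`,
an edge of `H_n^{(3)}`. So the rotation embeds `H` into `H_n^{(3)}`, and the cardinalities agree. -/
lemma cghIso_of_center {n : ℕ} [NeZero n] (hn : 6 ≤ n) {H : Finset (Finset (Fin n))}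
    (hH : IsSat M1cgh 3 H) (hcard : (Hn3 n hn).card ≤ H.card) {v s t : Fin n}
    (hv : HasArc H 3 v) (hs : HasArc H 3 s) (ht : HasArc H 3 t)
    (hsv : (s - v).val = n - 1) (htv : (t - v).val = n - 2) : CGHIso H (Hn3 n hn) := by
  classical
  have hinj : Function.Injective (Finset.image (fun x : Fin n => x - v)) :=
    Finset.image_injective sub_left_injective
  have meet : ∀ u, HasArc H 3 u → ∀ e ∈ H, ∃ x ∈ e, (x - u).val < 3 := by
    rintro u ⟨f, hf, hfx⟩ e he
    by_contra hcon
    push Not at hcon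
    exact arcs_meet hH hf he hfx hcon
  have hsub : H.image (Finset.image (fun x : Fin n => x - v)) ⊆ Hn3 n hn := by
    intro e' he'
    obtain ⟨e, he, rfl⟩ := Finset.mem_image.1 he'
    obtain ⟨x, hx, hx'⟩ := meet v hv e he
    obtain ⟨y, hy, hy'⟩ := meet s hs e he
    obtain ⟨z, hz, hz'⟩ := meet t ht e he
    have := sub_val' v y s
    have := sub_val' v z t
    have mem : ∀ i : Fin n, (x - v).val = i.val ∨ (y - v).val = i.val ∨ (z - v).val = i.val →
        i ∈ e.image (fun x : Fin n => x - v) := by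
      rintro i (h | h | h)
      · exact Finset.mem_image.2 ⟨x, hx, Fin.ext h⟩
      · exact Finset.mem_image.2 ⟨y, hy, Fin.ext h⟩
      · exact Finset.mem_image.2 ⟨z, hz, Fin.ext h⟩
    rw [Hn3, Finset.mem_filter, Finset.mem_powersetCard]
    refine ⟨⟨Finset.subset_univ _, ?_⟩, ?_⟩
    · rw [Finset.card_image_of_injective _ sub_left_injective, hH.1 e he]
    have b1 := (y - v).2
    have b2 := (z - v).2
    have cases : ((x - v).val = 0 ∨ (y - v).val = 0 ∨ (z - v).val = 0) ∨
        ((x - v).val = 1 ∨ (y - v).val = 1) ∧ ((z - v).val = n - 2 ∨ (z - v).val = n - 1) ∨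
        ((x - v).val = 2 ∨ (x - v).val = 1) ∧ (y - v).val = n - 1 := by
      clear mem hinj meet
      omega
    rcases cases with h | ⟨h, h' | h'⟩ | ⟨h | h, h'⟩
    · exact Or.inl (mem _ h)
    · exact Or.inr (Or.inl ⟨mem _ (h.imp_right Or.inl), mem _ (Or.inr (Or.inr h'))⟩)
    · exact Or.inr (Or.inr (Or.inl ⟨mem _ (h.imp_right Or.inl), mem _ (Or.inr (Or.inr h'))⟩))
    · exact Or.inr (Or.inr (Or.inr ⟨mem _ (Or.inl h), mem _ (Or.inr (Or.inl h'))⟩))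
    · exact Or.inr (Or.inr (Or.inl ⟨mem _ (Or.inl h), mem _ (Or.inr (Or.inl h'))⟩))
  have heq := Finset.eq_of_subset_of_card_le hsub
    (by rw [Finset.card_image_of_injective _ hinj]; exact hcard)
  refine ⟨Equiv.subRight v, fun a b c habc => ?_, fun e => ?_⟩
  · have := a.2
    have := b.2
    have := c.2
    simp only [CyclicSbtw, Equiv.subRight_apply, Fin.lt_def] at habc ⊢
    rcases sub_val a v with ⟨ha, ha'⟩ | ⟨ha, ha'⟩ <;>
      rcases sub_val b v with ⟨hb, hb'⟩ | ⟨hb, hb'⟩ <;>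
      rcases sub_val c v with ⟨hc, hc'⟩ | ⟨hc, hc'⟩ <;>
      rw [ha', hb', hc'] <;> clear ha' hb' hc' <;>
      rcases habc with ⟨h1, h2⟩ | ⟨h1, h2⟩ | ⟨h1, h2⟩ <;> omega
  · change e ∈ H ↔ Finset.image (fun x : Fin n => x - v) e ∈ Hn3 n hn
    rw [← heq, Finset.mem_image]
    exact ⟨fun h => ⟨e, h, rfl⟩, fun ⟨e₁, h₁, h₂⟩ => hinj h₂ ▸ h₁⟩

-- STATEMENT 2
theorem sat_M1_three (n : ℕ) (hn : 6 ≤ n) :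
    satNum M1cgh 3 n = (n - 1).choose 2 + 3 * n - 11 ∧
    IsSat M1cgh 3 (Hn3 n hn) ∧
    (Hn3 n hn).card = (n - 1).choose 2 + 3 * n - 11 ∧
    (6 < n → ∀ H : Finset (Finset (Fin n)), IsSat M1cgh 3 H →
      H.card = (n - 1).choose 2 + 3 * n - 11 → CGHIso H (Hn3 n hn)) := by
  have key : ∀ H : Finset (Finset (Fin n)), IsSat M1cgh 3 H →
      (n - 1).choose 2 + 3 * n - 11 ≤ H.card ∧
      (H.card = (n - 1).choose 2 + 3 * n - 11 → 6 < n → arcCount H 3 = 3) := by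
    obtain ⟨m, rfl⟩ : ∃ m, n = m + 6 := ⟨n - 6, by omega⟩
    intro H hH
    have := card_ge_and_arcCount_three hH
    rw [show m + 6 - 1 = m + 5 by omega]
    exact ⟨by omega, fun h h' => this.2 (by omega) (by omega)⟩
  have hsat := Hn3_isSat n hn
  have hcard : (Hn3 n hn).card = (n - 1).choose 2 + 3 * n - 11 :=
    le_antisymm (Hn3_card_le n hn) (key _ hsat).1
  refine ⟨le_antisymm (Nat.sInf_le ⟨_, hsat, hcard⟩) ?_, hsat, hcard, fun h6 H hH hc => ?_⟩
  · refine le_csInf ⟨_, _, hsat, rfl⟩ ?_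
    rintro k ⟨H, hH, rfl⟩
    exact (key H hH).1
  · have : NeZero n := ⟨by omega⟩
    obtain ⟨v, s, t, hv, hs, ht, hsv, htv⟩ := exists_center h6 hH ((key H hH).2 hc h6)
    exact cghIso_of_center hn hH (by omega) hv hs ht hsv htv
end

section
/- There exist constants c, C > 0 and N such that for every n ≥ N and every F ∈ {M_1, M_3, D_1, D_2}, one has c·n² ≤ sat_○(n, F) ≤ C·n²; that is, sat_○(n, F) = Θ(n²) for F ∈ {M_1, M_3, D_1, D_2}. -/
/-!
Both bounds come from elementary arguments that treat the four hypergraphs in parallel.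

Lower bound. In a saturated `H`, any three distinct points contain two that lie in a common edge
(`Covers`). Hence every ordered triple of points has a pair among its coordinates that is either
equal or covered by an edge; at most `9|H| + n` ordered pairs are of this kind, so
`n³ ≤ 3n(9|H| + n)` (`Covers.card_ge`).
The property `Covers` is checked as follows.
* For `D_1` and `D_2`, the two edges of the forbidden hypergraph share two vertices, so a missing
  triple that completes a copy shares two vertices with an edge of `H`.
* For `M_3`, a triple with two cyclically consecutive vertices is in no copy of `M_3`, hence it
  belongs to `H`; so every point lies in a common edge with any other point.
* For `M_1`, fix a point `a` and cut the circle at `a`. The edges of `H` avoiding `a` span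
  pairwise intersecting intervals, and by Helly's theorem on the line some point `x` lies in all of
  them. No triple containing `a` and `x` is separated from an edge of `H`, so all these triples
  belong to `H`.

Upper bound. Extend a suitable `F`-free family to a saturated `H` and show `|H| ≤ 3n²`.
* For `D_2`, any saturated `H` works: its edges are determined by their two smallest vertices.
* For `D_1`, start from all triples `{2i, 2i+1, c}` with `c > 2i + 1`; every `D_1`-free extension
  consists of triples containing two consecutive points.
* For `M_3`, start from all triples through `0`; any other edge contains two consecutive points, as
  otherwise it interleaves with `{0, p+1, q+1}`, where `p < q` are its smallest vertices.
* For `M_1`, start from all triples through `0`; any other edge contains `1` or `n - 1`, as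
  otherwise it is separated from `{n-1, 0, 1}`.
-/

open Finset

/-! ### Cyclic orderings of four and of six points -/

/-- `a, b, c, d` are in strict cyclic order: one of the four rotations of `(a, b, c, d)` is
increasing. It is stated on `ℕ`, without subtraction, so that `omega` can use it. -/
def Cyc4 (a b c d : ℕ) : Prop :=
  (a < b ∧ b < c ∧ c < d) ∨ (b < c ∧ c < d ∧ d < a) ∨ (c < d ∧ d < a ∧ a < b) ∨
    (d < a ∧ a < b ∧ b < c)

/-- `a, b, c, d, e, f` are in strict cyclic order: one of the six rotations is increasing. -/
def Cyc6 (a b c d e f : ℕ) : Prop :=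
  (a < b ∧ b < c ∧ c < d ∧ d < e ∧ e < f) ∨ (b < c ∧ c < d ∧ d < e ∧ e < f ∧ f < a) ∨
  (c < d ∧ d < e ∧ e < f ∧ f < a ∧ a < b) ∨ (d < e ∧ e < f ∧ f < a ∧ a < b ∧ b < c) ∨
  (e < f ∧ f < a ∧ a < b ∧ b < c ∧ c < d) ∨ (f < a ∧ a < b ∧ b < c ∧ c < d ∧ d < e)

theorem cyclicSorted_four {n : ℕ} (a b c d : Fin n) :
    CyclicSorted [a, b, c, d] ↔ Cyc4 a b c d := by
  unfold CyclicSorted List.Chain' Cyc4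
  constructor
  · rintro ⟨k, hk⟩
    rw [← List.rotate_mod] at hk
    have h4 : k % 4 < 4 := Nat.mod_lt _ (by norm_num)
    change ([a, b, c, d].rotate (k % 4)).IsChain _ at hk
    generalize k % 4 = j at hk h4
    interval_cases j <;> simp [List.rotate] at hk <;> omega
  · rintro (h | h | h | h)
    · exact ⟨0, by simp [List.rotate]; omega⟩
    · exact ⟨1, by simp [List.rotate]; omega⟩
    · exact ⟨2, by simp [List.rotate]; omega⟩
    · exact ⟨3, by simp [List.rotate]; omega⟩

theorem cyclicSorted_six {n : ℕ} (a b c d e f : Fin n) :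
    CyclicSorted [a, b, c, d, e, f] ↔ Cyc6 a b c d e f := by
  unfold CyclicSorted List.Chain' Cyc6
  constructor
  · rintro ⟨k, hk⟩
    rw [← List.rotate_mod] at hk
    have h4 : k % 6 < 6 := Nat.mod_lt _ (by norm_num)
    change ([a, b, c, d, e, f].rotate (k % 6)).IsChain _ at hk
    generalize k % 6 = j at hk h4
    interval_cases j <;> simp [List.rotate] at hk <;> omega
  · rintro (h | h | h | h | h | h)
    · exact ⟨0, by simp [List.rotate]; omega⟩
    · exact ⟨1, by simp [List.rotate]; omega⟩
    · exact ⟨2, by simp [List.rotate]; omega⟩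
    · exact ⟨3, by simp [List.rotate]; omega⟩
    · exact ⟨4, by simp [List.rotate]; omega⟩
    · exact ⟨5, by simp [List.rotate]; omega⟩

theorem CyclicSorted.nodup {n : ℕ} {l : List (Fin n)} (h : CyclicSorted l) : l.Nodup := by
  obtain ⟨k, hk⟩ := h
  have := (List.isChain_iff_pairwise.1 hk)
  exact List.nodup_rotate.1 (this.imp fun h => h.ne)

theorem hasCopy_four {n : ℕ} (H : Finset (Finset (Fin n))) (E : Finset (Finset (Fin 4))) :
    HasCopy ⟨4, E⟩ H ↔ ∃ a b c d : Fin n, Cyc4 a b c d ∧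
      ∀ e ∈ E, e.image ![a, b, c, d] ∈ H := by
  unfold HasCopy
  constructor
  · rintro ⟨f, -, hs, he⟩
    refine ⟨f 0, f 1, f 2, f 3, (cyclicSorted_four _ _ _ _).1 (by simpa using hs), ?_⟩
    have : ![f 0, f 1, f 2, f 3] = f := by
      funext i; fin_cases i <;> rfl
    rwa [this]
  · rintro ⟨a, b, c, d, hs, he⟩
    have hs' : CyclicSorted (List.ofFn ![a, b, c, d]) := by
      simpa using (cyclicSorted_four _ _ _ _).2 hs
    exact ⟨![a, b, c, d], List.nodup_ofFn.1 hs'.nodup, hs', he⟩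

theorem hasCopy_six {n : ℕ} (H : Finset (Finset (Fin n))) (E : Finset (Finset (Fin 6))) :
    HasCopy ⟨6, E⟩ H ↔ ∃ a b c d e f : Fin n, Cyc6 a b c d e f ∧
      ∀ t ∈ E, t.image ![a, b, c, d, e, f] ∈ H := by
  unfold HasCopy
  constructor
  · rintro ⟨f, -, hs, he⟩
    refine ⟨f 0, f 1, f 2, f 3, f 4, f 5,
      (cyclicSorted_six _ _ _ _ _ _).1 (by simpa using hs), ?_⟩
    have : ![f 0, f 1, f 2, f 3, f 4, f 5] = f := by
      funext i; fin_cases i <;> rfl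
    rwa [this]
  · rintro ⟨a, b, c, d, e, f, hs, he⟩
    have hs' : CyclicSorted (List.ofFn ![a, b, c, d, e, f]) := by
      simpa using (cyclicSorted_six _ _ _ _ _ _).2 hs
    exact ⟨![a, b, c, d, e, f], List.nodup_ofFn.1 hs'.nodup, hs', he⟩

theorem hasCopy_D1 {n : ℕ} (H : Finset (Finset (Fin n))) :
    HasCopy D1cgh H ↔ ∃ a b c d : Fin n, Cyc4 a b c d ∧ {a, b, c} ∈ H ∧ {a, c, d} ∈ H := by
  rw [D1cgh, hasCopy_four]; simp [image_insert]

theorem hasCopy_D2 {n : ℕ} (H : Finset (Finset (Fin n))) :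
    HasCopy D2cgh H ↔ ∃ a b c d : Fin n, Cyc4 a b c d ∧ {a, b, c} ∈ H ∧ {a, b, d} ∈ H := by
  rw [D2cgh, hasCopy_four]; simp [image_insert]

theorem hasCopy_M1 {n : ℕ} (H : Finset (Finset (Fin n))) :
    HasCopy M1cgh H ↔ ∃ a b c d e f : Fin n, Cyc6 a b c d e f ∧
      {a, b, c} ∈ H ∧ {d, e, f} ∈ H := by
  rw [M1cgh, hasCopy_six]; simp [image_insert]

theorem hasCopy_M3 {n : ℕ} (H : Finset (Finset (Fin n))) :
    HasCopy M3cgh H ↔ ∃ a b c d e f : Fin n, Cyc6 a b c d e f ∧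
      {a, c, e} ∈ H ∧ {b, d, f} ∈ H := by
  rw [M3cgh, hasCopy_six]; simp [image_insert]

/-! ### Cutting the circle at a point -/

/-- The number of clockwise steps from `a` to `v`, i.e. the position of `v` on the line obtained by
cutting the circle just before `a`. -/
def key {n : ℕ} (a v : Fin n) : ℕ := if a ≤ v then (v : ℕ) - a else v + n - a

theorem key_inj {n : ℕ} (a : Fin n) : Function.Injective (key a) := by
  intro x y h
  unfold key at h
  ext
  split_ifs at h <;> omega

theorem key_spec {n : ℕ} (a v : Fin n) :
    (a : ℕ) ≤ v ∧ key a v + a = v ∨ (v : ℕ) < a ∧ key a v + a = v + n := by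
  unfold key
  split_ifs <;> omega

theorem Cyc6.rotate {a b c d e f : ℕ} (h : Cyc6 a b c d e f) : Cyc6 b c d e f a := by
  unfold Cyc6 at *
  tauto

/-- A rotation of the circle preserves strict cyclic orders. Primed numbers are the positions after
the cut at `a`; starting from increasing positions on one side, the only freedom is how many of the
points precede `a`, and this number selects the rotation that is increasing on the other side. -/
theorem cyc6_of_shift {n a u v w x y z u' v' w' x' y' z' : ℕ}
    (h1 : a ≤ u ∧ u' + a = u ∨ u < a ∧ u' + a = u + n)
    (h2 : a ≤ v ∧ v' + a = v ∨ v < a ∧ v' + a = v + n)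
    (h3 : a ≤ w ∧ w' + a = w ∨ w < a ∧ w' + a = w + n)
    (h4 : a ≤ x ∧ x' + a = x ∨ x < a ∧ x' + a = x + n)
    (h5 : a ≤ y ∧ y' + a = y ∨ y < a ∧ y' + a = y + n)
    (h6 : a ≤ z ∧ z' + a = z ∨ z < a ∧ z' + a = z + n)
    (_ : u < n) (hv : v < n) (hw : w < n) (hx : x < n) (hy : y < n) (hz : z < n) :
    (u' < v' ∧ v' < w' ∧ w' < x' ∧ x' < y' ∧ y' < z' → Cyc6 u v w x y z) ∧
    (u < v ∧ v < w ∧ w < x ∧ x < y ∧ y < z → Cyc6 u' v' w' x' y' z') := by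
  unfold Cyc6
  constructor
  · rintro ⟨g1, g2, g3, g4, g5⟩
    rcases h1 with h1 | h1 <;> rcases h2 with h2 | h2 <;> try (exfalso; clear h3 h4 h5 h6; omega)
    all_goals rcases h3 with h3 | h3 <;> try (exfalso; clear h4 h5 h6; omega)
    all_goals rcases h4 with h4 | h4 <;> try (exfalso; clear h5 h6; omega)
    all_goals rcases h5 with h5 | h5 <;> try (exfalso; clear h6; omega)
    all_goals rcases h6 with h6 | h6 <;> try (exfalso; omega)
    · exact .inl (by omega)
    · exact .inr (.inr (.inr (.inr (.inr (by omega)))))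
    · exact .inr (.inr (.inr (.inr (.inl (by omega)))))
    · exact .inr (.inr (.inr (.inl (by omega))))
    · exact .inr (.inr (.inl (by omega)))
    · exact .inr (.inl (by omega))
    · exact .inl (by omega)
  · rintro ⟨g1, g2, g3, g4, g5⟩
    rcases h1 with h1 | h1 <;> rcases h2 with h2 | h2 <;> try (exfalso; clear h3 h4 h5 h6; omega)
    all_goals rcases h3 with h3 | h3 <;> try (exfalso; clear h4 h5 h6; omega)
    all_goals rcases h4 with h4 | h4 <;> try (exfalso; clear h5 h6; omega)
    all_goals rcases h5 with h5 | h5 <;> try (exfalso; clear h6; omega)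
    all_goals rcases h6 with h6 | h6 <;> try (exfalso; omega)
    · exact .inl (by omega)
    · exact .inr (.inl (by omega))
    · exact .inr (.inr (.inl (by omega)))
    · exact .inr (.inr (.inr (.inl (by omega))))
    · exact .inr (.inr (.inr (.inr (.inl (by omega)))))
    · exact .inr (.inr (.inr (.inr (.inr (by omega)))))
    · exact .inl (by omega)

/-- The cyclic order of six points can be read off from their positions after a cut at `a`. -/
theorem cyc6_key {n : ℕ} (a u v w x y z : Fin n) :
    Cyc6 (key a u) (key a v) (key a w) (key a x) (key a y) (key a z) ↔ Cyc6 u v w x y z := by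
  have S := fun u v w x y z : Fin n =>
    cyc6_of_shift (key_spec a u) (key_spec a v) (key_spec a w) (key_spec a x) (key_spec a y)
      (key_spec a z) u.2 v.2 w.2 x.2 y.2 z.2
  -- a cyclic order is reduced to an increasing one by rotating, and six rotations are the identity
  constructor
  · rintro (h | h | h | h | h | h)
    · exact (S _ _ _ _ _ _).1 h
    · exact ((S _ _ _ _ _ _).1 h).rotate.rotate.rotate.rotate.rotate
    · exact ((S _ _ _ _ _ _).1 h).rotate.rotate.rotate.rotate
    · exact ((S _ _ _ _ _ _).1 h).rotate.rotate.rotate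
    · exact ((S _ _ _ _ _ _).1 h).rotate.rotate
    · exact ((S _ _ _ _ _ _).1 h).rotate
  · rintro (h | h | h | h | h | h)
    · exact (S _ _ _ _ _ _).2 h
    · exact ((S _ _ _ _ _ _).2 h).rotate.rotate.rotate.rotate.rotate
    · exact ((S _ _ _ _ _ _).2 h).rotate.rotate.rotate.rotate
    · exact ((S _ _ _ _ _ _).2 h).rotate.rotate.rotate
    · exact ((S _ _ _ _ _ _).2 h).rotate.rotate
    · exact ((S _ _ _ _ _ _).2 h).rotate

theorem exists_sorted_s4 {n : ℕ} {κ : Fin n → ℕ} (hκ : Function.Injective κ) {h : Finset (Fin n)}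
    (hc : h.card = 3) : ∃ p q r, κ p < κ q ∧ κ q < κ r ∧ h = {p, q, r} := by
  obtain ⟨x, y, z, hxy, hxz, hyz, rfl⟩ := card_eq_three.1 hc
  have h1 := hκ.ne hxy
  have h2 := hκ.ne hxz
  have h3 := hκ.ne hyz
  rcases lt_or_gt_of_ne h1 with a | a <;> rcases lt_or_gt_of_ne h2 with b | b <;>
    rcases lt_or_gt_of_ne h3 with c | c
  · exact ⟨x, y, z, a, c, rfl⟩
  · exact ⟨x, z, y, b, c, by grind⟩
  · omega
  · exact ⟨z, x, y, b, a, by grind⟩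
  · exact ⟨y, x, z, a, b, by grind⟩
  · omega
  · exact ⟨y, z, x, c, b, by grind⟩
  · exact ⟨z, y, x, c, a, by grind⟩

/-! ### Counting, and existence of saturated families -/

/-- Among any three distinct points, two lie in a common edge of `H`; in other words the graph of
pairs covered by no edge is triangle-free. -/
def Covers {n : ℕ} (H : Finset (Finset (Fin n))) : Prop :=
  ∀ x y z : Fin n, x ≠ y → x ≠ z → y ≠ z →
    ∃ h ∈ H, x ∈ h ∧ y ∈ h ∨ x ∈ h ∧ z ∈ h ∨ y ∈ h ∧ z ∈ h

/-- Each ordered triple has two coordinates that are equal or lie in a common edge, and there are at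
most `9|H| + n` such ordered pairs. -/
theorem Covers.card_ge {n : ℕ} {H : Finset (Finset (Fin n))} (hc : Covers H)
    (hH : ∀ h ∈ H, h.card = 3) : n ^ 2 ≤ 27 * H.card + 3 * n := by
  classical
  rcases Nat.eq_zero_or_pos n with rfl | hn
  · simp
  -- the ordered pairs that are equal or lie in a common edge
  set S : Finset (Fin n × Fin n) :=
    H.biUnion (fun h => h ×ˢ h) ∪ univ.image (fun x => (x, x)) with hS
  have hSc : S.card ≤ 9 * H.card + n := by
    refine (card_union_le _ _).trans (add_le_add ?_ ?_)
    · refine (card_biUnion_le_card_mul _ _ 9 fun h hh => ?_).trans (by rw [mul_comm])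
      rw [card_product, hH h hh]
    · exact card_image_le.trans (by simp)
  have hcov : (univ : Finset (Fin n × Fin n × Fin n)) ⊆
      ((S ×ˢ univ).image (fun p => (p.1.1, p.1.2, p.2)) ∪
        (S ×ˢ univ).image (fun p => (p.1.1, p.2, p.1.2))) ∪
        (S ×ˢ univ).image (fun p => (p.2, p.1.1, p.1.2)) := by
    rintro ⟨x, y, z⟩ -
    have key : (x, y) ∈ S ∨ (x, z) ∈ S ∨ (y, z) ∈ S := by
      by_cases hxy : x = y
      · left; simp [hS, hxy]
      by_cases hxz : x = z
      · right; left; simp [hS, hxz]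
      by_cases hyz : y = z
      · right; right; simp [hS, hyz]
      obtain ⟨h, hh, h1⟩ := hc x y z hxy hxz hyz
      rcases h1 with h1 | h1 | h1
      · left; exact mem_union_left _ (mem_biUnion.2 ⟨h, hh, mem_product.2 h1⟩)
      · right; left; exact mem_union_left _ (mem_biUnion.2 ⟨h, hh, mem_product.2 h1⟩)
      · right; right; exact mem_union_left _ (mem_biUnion.2 ⟨h, hh, mem_product.2 h1⟩)
    rcases key with h | h | h
    · exact mem_union_left _ (mem_union_left _ (mem_image.2 ⟨((x, y), z), by simp [h], rfl⟩))
    · exact mem_union_left _ (mem_union_right _ (mem_image.2 ⟨((x, z), y), by simp [h], rfl⟩))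
    · exact mem_union_right _ (mem_image.2 ⟨((y, z), x), by simp [h], rfl⟩)
  have hI : ∀ f : (Fin n × Fin n) × Fin n → Fin n × Fin n × Fin n,
      ((S ×ˢ univ).image f).card ≤ S.card * n := fun f =>
    card_image_le.trans (by simp [card_product])
  have h1 := (card_le_card hcov).trans ((card_union_le _ _).trans
    (add_le_add ((card_union_le _ _).trans (add_le_add (hI _) (hI _))) (hI _)))
  simp only [card_univ, Fintype.card_prod, Fintype.card_fin] at h1
  have h2 : n * n ≤ 3 * S.card := Nat.le_of_mul_le_mul_left (by linarith) hn
  nlinarith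

/-- A family whose members are described by two points and one of three shapes has at most `3n²`
members. -/
theorem card_le_of_param {n : ℕ} {H : Finset (Finset (Fin n))}
    (g : Fin 3 → Fin n → Fin n → Finset (Fin n))
    (hg : ∀ h ∈ H, ∃ i x y, h = g i x y) : H.card ≤ 3 * n ^ 2 := by
  have : H ⊆ (univ : Finset (Fin 3 × Fin n × Fin n)).image fun p => g p.1 p.2.1 p.2.2 := by
    intro h hh
    obtain ⟨i, x, y, rfl⟩ := hg h hh
    exact mem_image.2 ⟨(i, x, y), mem_univ _, rfl⟩
  refine (card_le_card this).trans (card_image_le.trans ?_)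
  simp [sq]

/-- Every `F`-free family of triples extends to a saturated one, namely to a maximal `F`-free
family of triples containing it. -/
theorem exists_isSat_s4 {F : CGH} {n : ℕ} (H₀ : Finset (Finset (Fin n)))
    (h3 : ∀ h ∈ H₀, h.card = 3) (hF : ¬ HasCopy F H₀) :
    ∃ H, H₀ ⊆ H ∧ IsSat F 3 H := by
  obtain ⟨H, hle, hmax⟩ := (Set.toFinite
    {H : Finset (Finset (Fin n)) | (∀ h ∈ H, h.card = 3) ∧ ¬ HasCopy F H}).exists_le_maximal
      (And.intro h3 hF)
  refine ⟨H, hle, hmax.prop.1, hmax.prop.2, fun e he heH => ?_⟩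
  by_contra hcon
  have hmem : insert e H ∈
      {H : Finset (Finset (Fin n)) | (∀ h ∈ H, h.card = 3) ∧ ¬ HasCopy F H} :=
    ⟨fun h hh => (mem_insert.1 hh).elim (fun hq => hq ▸ he) (hmax.prop.1 h), hcon⟩
  exact heH (hmax.le_of_ge hmem (subset_insert e H) (mem_insert_self e H))

/-- The reduction to the two combinatorial facts. The family given by `hup` also shows that the
infimum defining `satNum` is taken over a nonempty set, so it is attained. The constant `1/54` comes
from `n² ≤ 27|H| + 3n` and `3n ≤ n²/2`. -/
theorem satNum_bounds_s4 {F : CGH} {n : ℕ} (hn : 6 ≤ n)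
    (hlow : ∀ H : Finset (Finset (Fin n)), IsSat F 3 H → Covers H)
    (hup : ∃ H : Finset (Finset (Fin n)), IsSat F 3 H ∧ H.card ≤ 3 * n ^ 2) :
    1 / 54 * (n : ℝ) ^ 2 ≤ satNum F 3 n ∧ (satNum F 3 n : ℝ) ≤ 3 * (n : ℝ) ^ 2 := by
  obtain ⟨H, hH, hHc⟩ := hup
  obtain ⟨K, hK, hKc⟩ : satNum F 3 n ∈
      {k | ∃ H : Finset (Finset (Fin n)), IsSat F 3 H ∧ H.card = k} :=
    Nat.sInf_mem ⟨_, H, hH, rfl⟩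
  have h1 : satNum F 3 n ≤ 3 * n ^ 2 := (Nat.sInf_le
    (show H.card ∈ {k | ∃ H : Finset (Finset (Fin n)), IsSat F 3 H ∧ H.card = k}
      from ⟨H, hH, rfl⟩)).trans hHc
  have h2 := (hlow K hK).card_ge hK.1
  rw [hKc] at h2
  have h3 : n ^ 2 ≤ 54 * satNum F 3 n := by nlinarith
  constructor
  · have : (n : ℝ) ^ 2 ≤ 54 * satNum F 3 n := by exact_mod_cast h3
    linarith
  · exact_mod_cast h1

theorem val_injective (n : ℕ) : Function.Injective (fun v : Fin n => (v : ℕ)) :=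
  Fin.val_injective

theorem card_three_of_lt {n : ℕ} {κ : Fin n → ℕ} {p q r : Fin n} (h1 : κ p < κ q)
    (h2 : κ q < κ r) : ({p, q, r} : Finset (Fin n)).card = 3 := by
  refine card_eq_three.2 ⟨p, q, r, ?_, ?_, ?_, rfl⟩ <;> rintro rfl <;> omega

theorem card_three {n : ℕ} {p q r : Fin n} (h1 : p ≠ q) (h2 : p ≠ r) (h3 : q ≠ r) :
    ({p, q, r} : Finset (Fin n)).card = 3 := card_eq_three.2 ⟨p, q, r, h1, h2, h3, rfl⟩

/-! ### Two edges sharing two vertices: `D_1` and `D_2` -/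

/-- An edge sharing two vertices `a, b` with `{x, y, z}` covers one of the pairs of that triple. -/
theorem two_mem_triple {n : ℕ} {a b x y z : Fin n} {h : Finset (Fin n)} (hab : a ≠ b)
    (ha : a ∈ h) (hb : b ∈ h) (ha' : a ∈ ({x, y, z} : Finset (Fin n)))
    (hb' : b ∈ ({x, y, z} : Finset (Fin n))) :
    x ∈ h ∧ y ∈ h ∨ x ∈ h ∧ z ∈ h ∨ y ∈ h ∧ z ∈ h := by
  simp only [mem_insert, mem_singleton] at ha' hb'
  rcases ha' with rfl | rfl | rfl <;> rcases hb' with rfl | rfl | rfl <;> simp_all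

theorem covers_D1 {n : ℕ} {H : Finset (Finset (Fin n))} (hs : IsSat D1cgh 3 H) : Covers H := by
  intro x y z hxy hxz hyz
  by_cases he : {x, y, z} ∈ H
  · exact ⟨_, he, by simp⟩
  obtain ⟨a, b, c, d, hc, h1, h2⟩ := (hasCopy_D1 _).1 (hs.2.2 _ (card_three hxy hxz hyz) he)
  have hfree := hs.2.1
  rw [hasCopy_D1] at hfree
  have hac : a ≠ c := by rintro rfl; unfold Cyc4 at hc; omega
  have hac' : ∀ h : Finset (Fin n), a ∈ h → c ∈ h → h ∈ H → a ∈ ({x, y, z} : Finset (Fin n)) →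
      c ∈ ({x, y, z} : Finset (Fin n)) →
      ∃ h ∈ H, x ∈ h ∧ y ∈ h ∨ x ∈ h ∧ z ∈ h ∨ y ∈ h ∧ z ∈ h := by
    intro h ha hc hh h1 h2
    exact ⟨h, hh, two_mem_triple hac ha hc h1 h2⟩
  -- exactly one of the two edges of the copy is the new triple `{x, y, z}`
  rcases mem_insert.1 h1 with g1 | g1 <;> rcases mem_insert.1 h2 with g2 | g2
  · exfalso
    have : b ∈ ({a, c, d} : Finset (Fin n)) := by rw [g2, ← g1]; simp
    unfold Cyc4 at hc
    simp [Fin.ext_iff] at this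
    omega
  · exact hac' _ (by simp) (by simp) g2 (by rw [← g1]; simp) (by rw [← g1]; simp)
  · exact hac' _ (by simp) (by simp) g1 (by rw [← g2]; simp) (by rw [← g2]; simp)
  · exact absurd ⟨a, b, c, d, hc, g1, g2⟩ hfree

theorem covers_D2 {n : ℕ} {H : Finset (Finset (Fin n))} (hs : IsSat D2cgh 3 H) : Covers H := by
  intro x y z hxy hxz hyz
  by_cases he : {x, y, z} ∈ H
  · exact ⟨_, he, by simp⟩
  obtain ⟨a, b, c, d, hc, h1, h2⟩ := (hasCopy_D2 _).1 (hs.2.2 _ (card_three hxy hxz hyz) he)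
  have hfree := hs.2.1
  rw [hasCopy_D2] at hfree
  have hac : a ≠ b := by rintro rfl; unfold Cyc4 at hc; omega
  have hac' : ∀ h : Finset (Fin n), a ∈ h → b ∈ h → h ∈ H → a ∈ ({x, y, z} : Finset (Fin n)) →
      b ∈ ({x, y, z} : Finset (Fin n)) →
      ∃ h ∈ H, x ∈ h ∧ y ∈ h ∨ x ∈ h ∧ z ∈ h ∨ y ∈ h ∧ z ∈ h := by
    intro h ha hc hh h1 h2
    exact ⟨h, hh, two_mem_triple hac ha hc h1 h2⟩
  -- exactly one of the two edges of the copy is the new triple `{x, y, z}`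
  rcases mem_insert.1 h1 with g1 | g1 <;> rcases mem_insert.1 h2 with g2 | g2
  · exfalso
    have : c ∈ ({a, b, d} : Finset (Fin n)) := by rw [g2, ← g1]; simp
    unfold Cyc4 at hc
    simp [Fin.ext_iff] at this
    omega
  · exact hac' _ (by simp) (by simp) g2 (by rw [← g1]; simp) (by rw [← g1]; simp)
  · exact hac' _ (by simp) (by simp) g1 (by rw [← g2]; simp) (by rw [← g2]; simp)
  · exact absurd ⟨a, b, c, d, hc, g1, g2⟩ hfree

/-- In a `D_2`-free family an edge is determined by its smallest two vertices `a < b`: edges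
`{a, b, c}` and `{a, b, c'}` with `c, c'` beyond `b` would form a copy of `D_2`. -/
theorem upper_D2 (n : ℕ) :
    ∃ H : Finset (Finset (Fin n)), IsSat D2cgh 3 H ∧ H.card ≤ 3 * n ^ 2 := by
  obtain ⟨H, -, hs⟩ := exists_isSat_s4 (F := D2cgh) (n := n) ∅ (by simp)
    (by rw [hasCopy_D2]; simp)
  refine ⟨H, hs, ?_⟩
  have hfree := hs.2.1
  rw [hasCopy_D2] at hfree
  have : H.card ≤ (univ : Finset (Fin n × Fin n)).card := by
    refine card_le_card_of_forall_subsingleton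
      (fun h p => ∃ c, p.1 < p.2 ∧ p.2 < c ∧ h = {p.1, p.2, c}) ?_ ?_
    · intro h hh
      obtain ⟨p, q, r, h1, h2, h3⟩ := exists_sorted_s4 (val_injective n) (hs.1 h hh)
      exact ⟨(p, q), mem_univ _, r, h1, h2, h3⟩
    · rintro ⟨a, b⟩ -
      rintro h ⟨hh, c, hab, hbc, rfl⟩ h' ⟨hh', c', -, hbc', rfl⟩
      simp only [Fin.lt_def] at hab hbc hbc'
      rcases lt_trichotomy (c : ℕ) c' with hlt | heq | hlt
      · exact absurd ⟨a, b, c, c', .inl (by omega), hh, hh'⟩ hfree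
      · rw [Fin.ext heq]
      · exact absurd ⟨a, b, c', c, .inl (by omega), hh', hh⟩ hfree
  simp at this
  nlinarith

/-- The starting family consists of all triples `{2i, 2i+1, c}` with `c > 2i + 1`. It is `D_1`-free:
two such triples sharing two vertices have the same least vertex `2i`, hence share `{2i, 2i+1}`, and
no point lies between `2i` and `2i+1`. In an extension without `D_1`, the two smallest vertices of
every edge are consecutive. -/
theorem upper_D1 {n : ℕ} (hn : 6 ≤ n) :
    ∃ H : Finset (Finset (Fin n)), IsSat D1cgh 3 H ∧ H.card ≤ 3 * n ^ 2 := by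
  classical
  set H₀ : Finset (Finset (Fin n)) := univ.filter fun h => h.card = 3 ∧
    ∃ a ∈ h, ∃ b ∈ h, (a : ℕ) % 2 = 0 ∧ (b : ℕ) = a + 1 ∧ ∀ x ∈ h, (a : ℕ) ≤ x with hH₀
  obtain ⟨H, hsub, hs⟩ := exists_isSat_s4 (F := D1cgh) H₀
    (fun h hh => (mem_filter.1 hh).2.1) (by
      rw [hasCopy_D1]
      rintro ⟨u, v, w, x, hc, h1, h2⟩
      obtain ⟨-, -, a, ha, b, hb, hpar, hab, hmin⟩ := mem_filter.1 h1
      obtain ⟨-, -, a', ha', b', hb', hpar', hab', hmin'⟩ := mem_filter.1 h2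
      -- `a` and `a'` are the least vertices of `{u, v, w}` and `{u, w, x}`
      have k1 := hmin u (by simp)
      have k2 := hmin v (by simp)
      have k3 := hmin w (by simp)
      have k4 := hmin' u (by simp)
      have k5 := hmin' w (by simp)
      have k6 := hmin' x (by simp)
      simp only [mem_insert, mem_singleton, Fin.ext_iff] at ha hb ha' hb'
      clear hmin hmin' h1 h2
      unfold Cyc4 at hc
      rcases hc with hc | hc | hc | hc <;> omega)
  refine ⟨H, hs, card_le_of_param
    (fun _ x y => {x, ⟨(x + 1) % n, Nat.mod_lt _ (by omega)⟩, y}) fun h hh => ?_⟩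
  have hfree := hs.2.1
  rw [hasCopy_D1] at hfree
  obtain ⟨p, q, r, h1, h2, rfl⟩ := exists_sorted_s4 (val_injective n) (hs.1 h hh)
  have hmem : ∀ {a b c : Fin n}, (a : ℕ) % 2 = 0 → (b : ℕ) = a + 1 → (b : ℕ) < c →
      ({a, b, c} : Finset (Fin n)) ∈ H := fun {a b c} e1 e2 e3 => hsub <| by
    refine mem_filter.2 ⟨mem_univ _, card_three_of_lt (κ := fun v => (v : ℕ))
      (show (a : ℕ) < b by omega) e3, a, by simp, b, by simp, e1, e2, ?_⟩
    simp; omega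
  by_cases hp : (p : ℕ) % 2 = 0
  · by_cases hq : (q : ℕ) = p + 1
    · refine ⟨0, p, r, ?_⟩
      congr 2
      ext
      have := q.2
      change (q : ℕ) = (p + 1) % n
      rw [Nat.mod_eq_of_lt (by omega), hq]
    · -- the triple `{p, p+1, q}` lies on the other side of the pair `{p, q}`
      refine absurd ⟨p, ⟨p + 1, by omega⟩, q, r, .inl ?_, hmem hp rfl ?_, hh⟩ hfree
      · dsimp only; omega
      · dsimp only; omega
  · -- the triple `{p-1, p, r}` lies on the other side of the pair `{p, r}`
    refine absurd ⟨p, q, r, ⟨p - 1, by omega⟩, .inr (.inr (.inr ?_)), hh, ?_⟩ hfree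
    · dsimp only; omega
    · have := hmem (a := ⟨p - 1, by omega⟩) (b := p) (c := r) (by dsimp only; omega)
        (by dsimp only; omega) (by omega)
      convert this using 1
      ext; simp; tauto

/-! ### Interleaved triples: `M_3` -/

/-- A triple with two cyclically consecutive vertices `x, x'` is in no copy of `M_3`, where a vertex
of the other edge would separate them. So a saturated family contains it. -/
theorem mem_of_consecutive {n : ℕ} {H : Finset (Finset (Fin n))} (hs : IsSat M3cgh 3 H)
    {x x' y : Fin n} (hx : (x' : ℕ) = x + 1 ∨ (x : ℕ) + 1 = n ∧ (x' : ℕ) = 0)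
    (h1 : x ≠ x') (h2 : x ≠ y) (h3 : x' ≠ y) : {x, x', y} ∈ H := by
  by_contra he
  obtain ⟨a, b, c, d, e, f, hc, g1, g2⟩ := (hasCopy_M3 _).1 (hs.2.2 _ (card_three h1 h2 h3) he)
  have hfree := hs.2.1
  rw [hasCopy_M3] at hfree
  -- the other edge has a vertex strictly between any two vertices of the first
  have hsep : ∀ {a b c d e f : Fin n}, Cyc6 a b c d e f →
      ({a, c, e} : Finset (Fin n)) ≠ {x, x', y} := by
    intro a b c d e f hc heq
    have m1 : x ∈ ({a, c, e} : Finset (Fin n)) := by rw [heq]; simp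
    have m2 : x' ∈ ({a, c, e} : Finset (Fin n)) := by rw [heq]; simp
    simp only [mem_insert, mem_singleton, Fin.ext_iff] at m1 m2
    unfold Cyc6 at hc
    rcases hc with hc | hc | hc | hc | hc | hc <;> rcases m1 with m1 | m1 | m1 <;>
      rcases m2 with m2 | m2 | m2 <;> omega
  rcases mem_insert.1 g1 with g1 | g1
  · exact hsep hc g1
  rcases mem_insert.1 g2 with g2 | g2
  · exact hsep hc.rotate g2
  exact hfree ⟨a, b, c, d, e, f, hc, g1, g2⟩

/-- Already the pair formed by `x` and one of the other two points is covered, by a triple that also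
contains the successor `x'` of `x`. -/
theorem covers_M3 {n : ℕ} {H : Finset (Finset (Fin n))} (hs : IsSat M3cgh 3 H) : Covers H := by
  intro x y z hxy hxz hyz
  have hx := x.2
  have hn : 1 < n := by have := Fin.val_ne_of_ne hxy; have := y.2; omega
  obtain ⟨x', hx'⟩ : ∃ x' : Fin n, (x' : ℕ) = x + 1 ∨ (x : ℕ) + 1 = n ∧ (x' : ℕ) = 0 := by
    by_cases h : (x : ℕ) + 1 < n
    · exact ⟨⟨x + 1, h⟩, .inl rfl⟩
    · exact ⟨⟨0, by omega⟩, .inr ⟨by omega, rfl⟩⟩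
  have hne : x ≠ x' := by rintro rfl; omega
  by_cases hy : x' = y
  · exact ⟨_, mem_of_consecutive hs hx' hne hxz (hy ▸ hyz), by simp⟩
  · exact ⟨_, mem_of_consecutive hs hx' hne hxy hy, by simp⟩

/-- The starting family consists of all triples through `0`. The three shapes of edges in an
extension are: through `0`, smallest two vertices consecutive, largest two vertices consecutive. -/
theorem upper_M3 {n : ℕ} (hn : 6 ≤ n) :
    ∃ H : Finset (Finset (Fin n)), IsSat M3cgh 3 H ∧ H.card ≤ 3 * n ^ 2 := by
  classical
  set o : Fin n := ⟨0, by omega⟩ with ho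
  set H₀ : Finset (Finset (Fin n)) := univ.filter fun h => h.card = 3 ∧ o ∈ h with hH₀
  obtain ⟨H, hsub, hs⟩ := exists_isSat_s4 (F := M3cgh) H₀
    (fun h hh => (mem_filter.1 hh).2.1) (by
      rw [hasCopy_M3]
      rintro ⟨a, b, c, d, e, f, hc, h1, h2⟩
      have m1 := (mem_filter.1 h1).2.2
      have m2 := (mem_filter.1 h2).2.2
      simp only [mem_insert, mem_singleton, Fin.ext_iff] at m1 m2
      unfold Cyc6 at hc
      rcases m1 with m1 | m1 | m1 <;> rcases m2 with m2 | m2 | m2 <;> omega)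
  refine ⟨H, hs, card_le_of_param
    (fun i x y => if i = 0 then {o, x, y} else
      if i = 1 then {x, ⟨(x + 1) % n, Nat.mod_lt _ (by omega)⟩, y} else
        {y, x, ⟨(x + 1) % n, Nat.mod_lt _ (by omega)⟩}) fun h hh => ?_⟩
  have hfree := hs.2.1
  rw [hasCopy_M3] at hfree
  obtain ⟨p, q, r, h1, h2, rfl⟩ := exists_sorted_s4 (val_injective n) (hs.1 h hh)
  by_cases hp : (p : ℕ) = 0
  · exact ⟨0, q, r, by simp [show p = o from Fin.ext hp]⟩
  by_cases hq : (q : ℕ) = p + 1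
  · refine ⟨1, p, r, ?_⟩
    have : q = ⟨(p + 1) % n, Nat.mod_lt _ (by omega)⟩ := by
      ext; dsimp only; rw [Nat.mod_eq_of_lt (by omega), hq]
    rw [this]; rfl
  by_cases hr : (r : ℕ) = q + 1
  · refine ⟨2, q, p, ?_⟩
    have : r = ⟨(q + 1) % n, Nat.mod_lt _ (by omega)⟩ := by
      ext; dsimp only; rw [Nat.mod_eq_of_lt (by omega), hr]
    rw [this]; rfl
  -- otherwise `{p, q, r}` interleaves with `{0, p+1, q+1}`
  refine absurd ⟨o, p, ⟨p + 1, by omega⟩, q, ⟨q + 1, by omega⟩, r, .inl ?_, hsub ?_, hh⟩ hfree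
  · dsimp only [o]; omega
  · refine mem_filter.2 ⟨mem_univ _, card_three_of_lt (κ := fun v => (v : ℕ)) ?_ ?_, by simp⟩
    · dsimp only [o]; omega
    · dsimp only; omega

/-! ### Separated triples: `M_1` -/

/-- Cut the circle at `a`. The edges avoiding `a` span pairwise intersecting intervals, since two
disjoint intervals would give a copy of `M_1`; hence one point `x` lies in all these intervals
(Helly's theorem on the line). The witness is the rightmost of the left endpoints, if there are any. -/
theorem exists_pierce {n : ℕ} {H : Finset (Finset (Fin n))} (h3 : ∀ h ∈ H, h.card = 3)
    (hfree : ¬ HasCopy M1cgh H) (a : Fin n) :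
    ∃ x : Fin n, ∀ h ∈ H, a ∉ h → ∃ p ∈ h, ∃ q ∈ h, key a p ≤ key a x ∧ key a x ≤ key a q := by
  classical
  rw [hasCopy_M1] at hfree
  have : Nonempty (Fin n) := ⟨a⟩
  choose! P Q R hPQ hQR hh using fun h hh => exists_sorted_s4 (key_inj a) (h3 h hh)
  by_cases hne : (H.filter fun h => a ∉ h).Nonempty
  · obtain ⟨g, hg, hmax⟩ := exists_max_image _ (fun h => key a (P h)) hne
    have hgH := (mem_filter.1 hg).1
    refine ⟨P g, fun h hH ha => ⟨P h, ?_, R h, ?_, hmax h (mem_filter.2 ⟨hH, ha⟩), ?_⟩⟩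
    · have : P h ∈ ({P h, Q h, R h} : Finset (Fin n)) := by simp
      rwa [← hh h hH] at this
    · have : R h ∈ ({P h, Q h, R h} : Finset (Fin n)) := by simp
      rwa [← hh h hH] at this
    · by_contra! hlt
      refine hfree ⟨P h, Q h, R h, P g, Q g, R g, (cyc6_key a _ _ _ _ _ _).1 (.inl ?_), ?_, ?_⟩
      · exact ⟨hPQ h hH, hQR h hH, hlt, hPQ g hgH, hQR g hgH⟩
      · rwa [← hh h hH]
      · rwa [← hh g hgH]
  · exact ⟨a, fun h hH ha => absurd ⟨h, mem_filter.2 ⟨hH, ha⟩⟩ hne⟩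

/-- For a point `a` with piercing point `x`, an edge avoiding `a` has its span after the cut at `a`
containing `x`, so no arc separates it from a triple through `a` and `x`. All these triples
therefore lie in `H`. -/
theorem covers_M1 {n : ℕ} {H : Finset (Finset (Fin n))} (hs : IsSat M1cgh 3 H) : Covers H := by
  have hfree := hs.2.1
  rw [hasCopy_M1] at hfree
  intro a y z hay haz hyz
  obtain ⟨x, hx⟩ := exists_pierce hs.1 hs.2.1 a
  -- any triple through `a` and the piercing point belongs to `H`
  have main : ∀ e : Finset (Fin n), e.card = 3 → a ∈ e → (x = a ∨ x ∈ e) → e ∈ H := by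
    intro e he ha hxe
    have hxe : x ∈ e := hxe.elim (fun h => h ▸ ha) id
    by_contra heH
    have key0 : key a a = 0 := by unfold key; simp
    -- `e` and an edge of `H` never form a copy of `M_1`
    have hno : ∀ {u v w p q r : Fin n}, Cyc6 u v w p q r → {u, v, w} = e → {p, q, r} ∉ H := by
      rintro u v w p q r hc rfl hH
      have hc' := (cyc6_key a _ _ _ _ _ _).2 hc
      have hap : a ∉ ({p, q, r} : Finset (Fin n)) := by
        intro hmem
        simp only [mem_insert, mem_singleton, Fin.ext_iff] at ha hmem
        unfold Cyc6 at hc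
        rcases ha with ha | ha | ha <;> rcases hmem with hm | hm | hm <;> omega
      obtain ⟨s, hs, t, ht, hsx, hxt⟩ := hx _ hH hap
      simp only [mem_insert, mem_singleton] at ha hxe hs ht
      have ha' : key a u = 0 ∨ key a v = 0 ∨ key a w = 0 := by
        rcases ha with rfl | rfl | rfl <;> simp [key0]
      have hx' : key a x = key a u ∨ key a x = key a v ∨ key a x = key a w := by
        rcases hxe with rfl | rfl | rfl <;> simp
      have hs' : key a p ≤ key a x ∨ key a q ≤ key a x ∨ key a r ≤ key a x := by
        rcases hs with rfl | rfl | rfl <;> simp [hsx]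
      have ht' : key a x ≤ key a p ∨ key a x ≤ key a q ∨ key a x ≤ key a r := by
        rcases ht with rfl | rfl | rfl <;> simp [hxt]
      unfold Cyc6 at hc'
      clear hc hs ht ha hxe
      rcases hc' with hc | hc | hc | hc | hc | hc <;> rcases ha' with ha | ha | ha <;>
        rcases hx' with hx | hx | hx <;> omega
    obtain ⟨u, v, w, p, q, r, hc, h1, h2⟩ := (hasCopy_M1 _).1 (hs.2.2 e he heH)
    rcases mem_insert.1 h1 with g1 | g1 <;> rcases mem_insert.1 h2 with g2 | g2
    · have : p ∈ ({u, v, w} : Finset (Fin n)) := by rw [g1, ← g2]; simp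
      simp only [mem_insert, mem_singleton, Fin.ext_iff] at this
      unfold Cyc6 at hc
      rcases this with h | h | h <;> omega
    · exact hno hc g1 g2
    · exact hno hc.rotate.rotate.rotate g2 g1
    · exact hfree ⟨u, v, w, p, q, r, hc, g1, g2⟩
  by_cases hxa : x = a
  · exact ⟨_, main _ (card_three hay haz hyz) (by simp) (.inl hxa), by simp⟩
  by_cases hxy : x = y
  · exact ⟨_, main _ (card_three hay haz hyz) (by simp) (.inr (by simp [hxy])), by simp⟩
  · exact ⟨{a, x, y}, main _ (card_three (Ne.symm hxa) hay hxy) (by simp) (.inr (by simp)),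
      by simp⟩

/-- The starting family consists of all triples through `0`. The three shapes of edges in an
extension are: through `0`, through `1`, through `n - 1`. -/
theorem upper_M1 {n : ℕ} (hn : 6 ≤ n) :
    ∃ H : Finset (Finset (Fin n)), IsSat M1cgh 3 H ∧ H.card ≤ 3 * n ^ 2 := by
  classical
  set o : Fin n := ⟨0, by omega⟩ with ho
  set H₀ : Finset (Finset (Fin n)) := univ.filter fun h => h.card = 3 ∧ o ∈ h with hH₀
  obtain ⟨H, hsub, hs⟩ := exists_isSat_s4 (F := M1cgh) H₀
    (fun h hh => (mem_filter.1 hh).2.1) (by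
      rw [hasCopy_M1]
      rintro ⟨a, b, c, d, e, f, hc, h1, h2⟩
      have m1 := (mem_filter.1 h1).2.2
      have m2 := (mem_filter.1 h2).2.2
      simp only [mem_insert, mem_singleton, Fin.ext_iff] at m1 m2
      unfold Cyc6 at hc
      rcases m1 with m1 | m1 | m1 <;> rcases m2 with m2 | m2 | m2 <;> omega)
  refine ⟨H, hs, card_le_of_param
    (fun i x y => if i = 0 then {o, x, y} else
      if i = 1 then {⟨1, by omega⟩, x, y} else {x, y, ⟨n - 1, by omega⟩}) fun h hh => ?_⟩
  have hfree := hs.2.1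
  rw [hasCopy_M1] at hfree
  obtain ⟨p, q, r, h1, h2, rfl⟩ := exists_sorted_s4 (val_injective n) (hs.1 h hh)
  by_cases hp : (p : ℕ) = 0
  · exact ⟨0, q, r, by simp [show p = o from Fin.ext hp]⟩
  by_cases hp1 : (p : ℕ) = 1
  · refine ⟨1, q, r, ?_⟩
    rw [show p = ⟨1, by omega⟩ from Fin.ext hp1]; rfl
  by_cases hr : (r : ℕ) = n - 1
  · refine ⟨2, p, q, ?_⟩
    rw [show r = ⟨n - 1, by omega⟩ from Fin.ext hr]; rfl
  -- otherwise `{p, q, r}` is separated from `{n-1, 0, 1}`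
  refine absurd ⟨⟨n - 1, by omega⟩, o, ⟨1, by omega⟩, p, q, r, .inr (.inl ?_), hsub ?_, hh⟩ hfree
  · dsimp only [o]; omega
  · refine mem_filter.2 ⟨mem_univ _, card_three ?_ ?_ ?_, by simp⟩ <;>
      simp only [o, ne_eq, Fin.mk.injEq] <;> omega

-- STATEMENT 4
theorem sat_quadratic_order : ∃ c C : ℝ, 0 < c ∧ 0 < C ∧ ∃ N : ℕ, ∀ n : ℕ, N ≤ n →
    (c * n ^ 2 ≤ (satNum M1cgh 3 n : ℝ) ∧ (satNum M1cgh 3 n : ℝ) ≤ C * n ^ 2) ∧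
    (c * n ^ 2 ≤ (satNum M3cgh 3 n : ℝ) ∧ (satNum M3cgh 3 n : ℝ) ≤ C * n ^ 2) ∧
    (c * n ^ 2 ≤ (satNum D1cgh 3 n : ℝ) ∧ (satNum D1cgh 3 n : ℝ) ≤ C * n ^ 2) ∧
    (c * n ^ 2 ≤ (satNum D2cgh 3 n : ℝ) ∧ (satNum D2cgh 3 n : ℝ) ≤ C * n ^ 2) := by
  refine ⟨1 / 54, 3, by norm_num, by norm_num, 6, fun n hn => ⟨?_, ?_, ?_, ?_⟩⟩
  · exact satNum_bounds_s4 hn (fun _ => covers_M1) (upper_M1 hn)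
  · exact satNum_bounds_s4 hn (fun _ => covers_M3) (upper_M3 hn)
  · exact satNum_bounds_s4 hn (fun _ => covers_D1) (upper_D1 hn)
  · exact satNum_bounds_s4 hn (fun _ => covers_D2) (upper_D2 n)
end
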